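/- Let 0 < a < b with a < |q|·b and let m ≥ 3 be an integer. For δ > 0 set S_δ := {(z,ξ) ∈ ℂ² : a ≤ |z| ≤ b, |z·exp(2πiτξ)| ≤ δ} and S'_δ := {(z,ξ) ∈ ℂ² : |q|·a ≤ |z| ≤ b, |z·exp(2πiτξ)| ≤ δ}. Then there exist δ₀ > 0 and C > 0, depending only on τ, m, a, b, such that for every 0 < δ ≤ δ₀ and every Δ holomorphic on S_δ with ‖Δ‖_m := sup_{(z,ξ)∈S_δ} |Δ(z,ξ)|·|ξ|^m < ∞, there is a unique bounded holomorphic function h on S'_δ satisfying both (1) h(q·z, ξ−1) − h(z,ξ) = Δ(z,ξ) for all (z,ξ) ∈ S_δ, and (3') sup of |h(z,ξ)|·√(Im ξ) over {(z,ξ) ∈ S'_δ : Im ξ ≥ 1} is finite. Moreover this h satisfies sup_{S'_δ} |h| ≤ C·‖Δ‖_m and |h(z,ξ)| ≤ C·‖Δ‖_m/√(Im ξ) for every (z,ξ) ∈ S'_δ with Im ξ ≥ 1; and for every θ ∈ (0, π/2] there is D_θ > 0, depending only on θ (for the fixed τ, m, a, b), with |h(z,ξ)| ≤ D_θ·‖Δ‖_m/|ξ|^{m−2}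 for every (z,ξ) ∈ S'_δ with θ − ϖ ≤ arg ξ ≤ π − θ − ϖ. -/

import Mathlib

open Complex

/-- The domain `S_δ = {(z,ξ) : a ≤ |z| ≤ b, |z·exp(2πiτξ)| ≤ δ}`. -/
noncomputable def sectDom (τ : ℂ) (a b δ : ℝ) : Set (ℂ × ℂ) :=
  {p : ℂ × ℂ | a ≤ ‖p.1‖ ∧ ‖p.1‖ ≤ b ∧
    ‖p.1 * Complex.exp (2 * (Real.pi : ℂ) * Complex.I * τ * p.2)‖ ≤ δ}

/-- The enlarged domain `S'_δ = {(z,ξ) : |q|·a ≤ |z| ≤ b, |z·exp(2πiτξ)| ≤ δ}`,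
`q = exp(2πiτ)`. -/
noncomputable def sectDom' (τ : ℂ) (a b δ : ℝ) : Set (ℂ × ℂ) :=
  {p : ℂ × ℂ |
    ‖Complex.exp (2 * (Real.pi : ℂ) * Complex.I * τ)‖ * a ≤ ‖p.1‖ ∧
    ‖p.1‖ ≤ b ∧
    ‖p.1 * Complex.exp (2 * (Real.pi : ℂ) * Complex.I * τ * p.2)‖ ≤ δ}

/-- Properties of the solution `h` of statement 14: bounded holomorphic on `S'_δ`, solving
`h(q·z, ξ−1) − h(z,ξ) = Δ(z,ξ)` on `S_δ` (equation (1)), and with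
`sup |h|·√(Im ξ)` finite on `{Im ξ ≥ 1}` (condition (3')). -/
noncomputable def linSolProp (τ : ℂ) (a b δ : ℝ) (Δ h : ℂ × ℂ → ℂ) : Prop :=
  ContinuousOn h (sectDom' τ a b δ) ∧
  DifferentiableOn ℂ h (interior (sectDom' τ a b δ)) ∧
  (∃ M : ℝ, ∀ p ∈ sectDom' τ a b δ, ‖h p‖ ≤ M) ∧
  (∀ p ∈ sectDom τ a b δ,
    h (Complex.exp (2 * (Real.pi : ℂ) * Complex.I * τ) * p.1, p.2 - 1) - h p = Δ p) ∧
  (∃ M : ℝ, ∀ p ∈ sectDom' τ a b δ, 1 ≤ p.2.im →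
    ‖h p‖ * Real.sqrt p.2.im ≤ M)

section S14

open Set Filter Topology MeasureTheory

/-- The flow. -/
noncomputable def s14T (τ u : ℂ) (p : ℂ × ℂ) : ℂ × ℂ :=
  (p.1 * Complex.exp (-(2 * (Real.pi : ℂ) * Complex.I * u)), p.2 + u / τ)

/-- The kernel. -/
noncomputable def s14K (τ u : ℂ) : ℂ :=
  (Complex.exp (2 * (Real.pi : ℂ) * Complex.I * u / τ) - 1)⁻¹

/-- The line integral. -/
noncomputable def s14H (τ : ℂ) (Δ : ℂ × ℂ → ℂ) (y : ℝ) (p : ℂ × ℂ) : ℂ :=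
  τ⁻¹ * ∫ x : ℝ, Δ (s14T τ (x + y * I) p) * s14K τ (x + y * I)

lemma s14T_fst (τ u : ℂ) (p : ℂ × ℂ) :
    ‖(s14T τ u p).1‖ = ‖p.1‖ * Real.exp (2 * Real.pi * u.im) := by
  simp [s14T, Complex.norm_exp]

lemma s14T_w (τ u : ℂ) (hτ : τ ≠ 0) (p : ℂ × ℂ) :
    (s14T τ u p).1 * Complex.exp (2 * (Real.pi : ℂ) * Complex.I * τ * (s14T τ u p).2)
      = p.1 * Complex.exp (2 * (Real.pi : ℂ) * Complex.I * τ * p.2) := by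
  simp only [s14T]
  rw [mul_assoc, ← Complex.exp_add]
  congr 2
  field_simp
  ring

lemma s14T_mem (τ u : ℂ) (hτ : τ ≠ 0) (p : ℂ × ℂ) (α β δ : ℝ) :
    s14T τ u p ∈ sectDom τ α β δ ↔ α ≤ ‖p.1‖ * Real.exp (2 * Real.pi * u.im) ∧
      ‖p.1‖ * Real.exp (2 * Real.pi * u.im) ≤ β ∧
      ‖p.1 * Complex.exp (2 * (Real.pi : ℂ) * Complex.I * τ * p.2)‖ ≤ δ := by
  simp only [sectDom, mem_ofPred_eq, s14T_w τ u hτ, s14T_fst]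

lemma s14T_add (τ u v : ℂ) (p : ℂ × ℂ) : s14T τ u (s14T τ v p) = s14T τ (u + v) p := by
  simp only [s14T]
  ext
  · simp only
    rw [mul_assoc, ← Complex.exp_add]; congr 2; ring
  · simp only; ring

lemma s14T_zero (τ : ℂ) (p : ℂ × ℂ) : s14T τ 0 p = p := by
  simp [s14T]

lemma s14T_neg (τ : ℂ) (hτ : τ ≠ 0) (p : ℂ × ℂ) :
    (Complex.exp (2 * (Real.pi : ℂ) * Complex.I * τ) * p.1, p.2 - 1) = s14T τ (-τ) p := by
  simp only [s14T]
  ext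
  · simp only
    rw [mul_comm]; congr 2; ring
  · simp only; rw [neg_div, div_self hτ]; ring

lemma s14K_per (τ u : ℂ) (hτ : τ ≠ 0) : s14K τ (u + τ) = s14K τ u := by
  simp only [s14K]
  rw [mul_add, add_div, Complex.exp_add, mul_div_cancel_right₀ _ hτ, Complex.exp_two_pi_mul_I, mul_one]

lemma s14Q (τ : ℂ) : ‖Complex.exp (2 * (Real.pi : ℂ) * Complex.I * τ)‖
    = Real.exp (-(2 * Real.pi * τ.im)) := by
  simp [Complex.norm_exp]

lemma s14H_shift (τ : ℂ) (hτ : τ ≠ 0) (Δ : ℂ × ℂ → ℂ) (y : ℝ) (p : ℂ × ℂ) :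
    s14H τ Δ y (s14T τ (-τ) p) = s14H τ Δ (y - τ.im) p := by
  simp only [s14H, s14T_add]
  congr 1
  rw [← integral_add_right_eq_self _ τ.re]
  congr 1
  ext x
  have h1 : ((x + τ.re : ℝ) : ℂ) + y * I = (x + ((y - τ.im : ℝ) : ℂ) * I) + τ := by
    apply Complex.ext <;> simp
  rw [h1, s14K_per _ _ hτ]
  congr 3
  ring

lemma s14H_shift' (τ : ℂ) (hτ : τ ≠ 0) (Δ : ℂ × ℂ → ℂ) (y : ℝ) (p : ℂ × ℂ) :
    s14H τ Δ y (s14T τ τ p) = s14H τ Δ (y + τ.im) p := by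
  have := s14H_shift τ hτ Δ (y + τ.im) (s14T τ τ p)
  rw [s14T_add, neg_add_cancel, s14T_zero, add_sub_cancel_right] at this
  exact this.symm

lemma s14T_contu (τ : ℂ) (p : ℂ × ℂ) : Continuous (fun u : ℂ => s14T τ u p) := by
  unfold s14T; fun_prop

lemma s14T_diffu (τ : ℂ) (p : ℂ × ℂ) : Differentiable ℂ (fun u : ℂ => s14T τ u p) := by
  unfold s14T; fun_prop

lemma s14T_contp (τ u : ℂ) : Continuous (s14T τ u) := by
  unfold s14T; fun_prop

lemma s14T_diffp (τ u : ℂ) : Differentiable ℂ (s14T τ u) := by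
  unfold s14T; fun_prop

/-- The real size of the exponent. -/
lemma s14E_norm (τ u : ℂ) : ‖Complex.exp (2 * (Real.pi : ℂ) * Complex.I * u / τ)‖
    = Real.exp (-(2 * Real.pi * (u / τ).im)) := by
  rw [mul_div_assoc, Complex.norm_exp]; simp

lemma s14im_div (τ : ℂ) (x y : ℝ) : ((x + y * I) / τ : ℂ).im
    = (y * τ.re - x * τ.im) / Complex.normSq τ := by
  rw [Complex.div_im]; simp; ring

lemma s14E_ne (τ : ℂ) (hτ : 0 < τ.im) (u : ℂ) (h : ∀ n : ℤ, u.im ≠ n * τ.im) :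
    Complex.exp (2 * (Real.pi : ℂ) * Complex.I * u / τ) - 1 ≠ 0 := by
  have hτ0 : τ ≠ 0 := by rintro rfl; simp at hτ
  intro h0
  rw [sub_eq_zero, Complex.exp_eq_one_iff] at h0
  obtain ⟨n, hn⟩ := h0
  have h2 : (2 * (Real.pi : ℂ) * Complex.I) ≠ 0 := by simp [Real.pi_ne_zero]
  have : u = n * τ := by
    field_simp at hn
    rw [hn]; ring
  apply h n
  rw [this]; simp

lemma s14_window (t y : ℝ) (k : ℤ) (h1 : k * t < y) (h2 : y < (k + 1) * t) (n : ℤ) : y ≠ n * t := by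
  rintro rfl
  have ht : 0 < t := by nlinarith
  have a1 : (k : ℝ) < n := lt_of_mul_lt_mul_right h1 ht.le
  have a2 : (n : ℝ) < k + 1 := lt_of_mul_lt_mul_right h2 ht.le
  have b1 : k < n := by exact_mod_cast a1
  have b2 : n < k + 1 := by exact_mod_cast a2
  omega

lemma s14K_cont (τ : ℂ) (hτ : 0 < τ.im) (y : ℝ) (hy : ∀ n : ℤ, y ≠ n * τ.im) :
    Continuous (fun x : ℝ => s14K τ (x + y * I)) := by
  unfold s14K
  apply Continuous.inv₀
  · fun_prop
  · intro x
    apply s14E_ne τ hτ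
    simpa using hy

/-- Far away kernel bound. -/
lemma s14K_far (τ u : ℂ) (h : 1 ≤ |(u / τ).im|) : ‖s14K τ u‖ ≤ 2 := by
  have hpi := Real.pi_gt_three
  unfold s14K
  rw [norm_inv]
  apply inv_le_of_inv_le₀ (by norm_num)
  have e1 := s14E_norm τ u
  set E := Complex.exp (2 * (Real.pi : ℂ) * Complex.I * u / τ)
  rcases le_abs'.1 h with h | h
  · have : (2 : ℝ) ≤ ‖E‖ := by
      rw [e1]
      have := Real.add_one_le_exp (-(2 * Real.pi * (u / τ).im))
      nlinarith
    have h3 := norm_sub_norm_le E 1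
    simp at h3
    linarith
  · have : ‖E‖ ≤ 1 / 2 := by
      rw [e1, Real.exp_neg]
      have := Real.add_one_le_exp ((2 * Real.pi * (u / τ).im))
      rw [one_div]
      apply inv_anti₀ (by norm_num)
      nlinarith
    have h3 := norm_sub_norm_le 1 E
    rw [norm_sub_rev] at h3
    simp at h3
    linarith

lemma s14K_far' (τ u : ℂ) (h : (u / τ).im ≤ -1) : ‖s14K τ u‖ * (-(u / τ).im) ≤ 1 := by
  have hpi := Real.pi_gt_three
  unfold s14K
  rw [norm_inv]
  have e1 := s14E_norm τ u
  set E := Complex.exp (2 * (Real.pi : ℂ) * Complex.I * u / τ)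
  have : -(u / τ).im + 1 ≤ ‖E‖ := by
    rw [e1]
    have := Real.add_one_le_exp (-(2 * Real.pi * (u / τ).im))
    nlinarith
  have h3 := norm_sub_norm_le E 1
  simp at h3
  rw [inv_mul_le_iff₀ (by linarith)]
  linarith

/-- Kernel bound on a line. -/
lemma s14K_bound (τ : ℂ) (hτ : 0 < τ.im) (y : ℝ) (hy : ∀ n : ℤ, y ≠ n * τ.im) :
    ∃ κ : ℝ, 0 < κ ∧ ∀ x : ℝ, ‖s14K τ (x + y * I)‖ ≤ κ ∧
      ‖s14K τ (x + y * I)‖ * (-((x + y * I) / τ : ℂ).im) ≤ κ := by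
  have hτ0 : τ ≠ 0 := by rintro rfl; simp at hτ
  have hn : 0 < Complex.normSq τ := Complex.normSq_pos.2 hτ0
  set X : ℝ := (Complex.normSq τ + |y * τ.re|) / τ.im with hX
  obtain ⟨κ₀, hκ₀⟩ := (isCompact_Icc (a := -X) (b := X)).exists_bound_of_continuousOn
    (s14K_cont τ hτ y hy).continuousOn
  have key : ∀ x : ℝ, x ∉ Icc (-X) X → 1 ≤ |((x + y * I) / τ : ℂ).im| := by
    intro x hx
    rw [s14im_div, abs_div, abs_of_pos hn, le_div_iff₀ hn, one_mul]
    have hxX : X < |x| := by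
      by_contra hcon
      exact hx (abs_le.1 (not_lt.1 hcon))
    rw [hX, div_lt_iff₀ hτ] at hxX
    have := abs_sub_abs_le_abs_sub (x * τ.im) (y * τ.re)
    rw [abs_mul x, abs_of_pos hτ, abs_sub_comm] at this
    linarith
  refine ⟨2 + |κ₀|, by positivity, fun x => ?_⟩
  have A : ‖s14K τ (x + y * I)‖ ≤ 2 + |κ₀| := by
    by_cases hx : x ∈ Icc (-X) X
    · have := hκ₀ x hx
      have := le_abs_self κ₀
      linarith
    · have := s14K_far τ _ (key x hx)
      have := abs_nonneg κ₀
      linarith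
  refine ⟨A, ?_⟩
  by_cases hx : ((x + y * I) / τ : ℂ).im ≤ -1
  · have := s14K_far' τ _ hx
    have := abs_nonneg κ₀
    linarith
  · have h0 := norm_nonneg (s14K τ (x + y * I))
    nlinarith

end S14

section S14

open Set Filter Topology MeasureTheory

lemma s14_diff_integral (F : ℂ × ℂ → ℝ → ℂ) (p₀ : ℂ × ℂ) (R : ℝ) (hR : 0 < R) (bound : ℝ → ℝ)
    (hd : ∀ x, DifferentiableOn ℂ (fun p => F p x) (Metric.ball p₀ R))
    (hm : ∀ p ∈ Metric.ball p₀ R, AEStronglyMeasurable (F p) volume)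
    (hb : ∀ p ∈ Metric.ball p₀ R, ∀ x, ‖F p x‖ ≤ bound x)
    (hi : Integrable bound volume) :
    DifferentiableAt ℂ (fun p => ∫ x, F p x) p₀ := by
  have hp₀ : p₀ ∈ Metric.ball p₀ R := Metric.mem_ball_self hR
  have hda : ∀ x, ∀ p ∈ Metric.ball p₀ R, DifferentiableAt ℂ (fun p => F p x) p := fun x p hp =>
    (hd x).differentiableAt (Metric.isOpen_ball.mem_nhds hp)
  have hdir : ∀ v : ℂ × ℂ, AEStronglyMeasurable (fun x => fderiv ℂ (fun p => F p x) p₀ v) volume := by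
    intro v
    have hlim : Tendsto (fun n : ℕ => p₀ + ((n : ℂ) + 1)⁻¹ • v) atTop (𝓝 p₀) := by
      have h1 : Tendsto (fun n : ℕ => ((n : ℂ) + 1)⁻¹) atTop (𝓝 0) := by
        have := tendsto_one_div_add_atTop_nhds_zero_nat (𝕜 := ℂ)
        simpa [one_div] using this
      have h2 := (h1.smul_const v).const_add p₀
      simpa using h2
    obtain ⟨n₀, hn₀⟩ := eventually_atTop.1 (hlim.eventually (Metric.ball_mem_nhds p₀ hR))
    refine aestronglyMeasurable_of_tendsto_ae atTop
      (f := fun (n : ℕ) x => (((n + n₀ : ℕ) : ℂ) + 1) •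
        (F (p₀ + (((n + n₀ : ℕ) : ℂ) + 1)⁻¹ • v) x - F p₀ x)) ?_ ?_
    · intro n
      exact ((hm _ (hn₀ (n + n₀) (by omega))).sub (hm _ hp₀)).const_smul (((n + n₀ : ℕ) : ℂ) + 1)
    · refine Eventually.of_forall fun x => ?_
      have hfd := (hda x p₀ hp₀).hasFDerivAt
      have h3 := hfd.lim v (α := ℕ) (l := atTop) (c := fun n : ℕ => (((n + n₀ : ℕ) : ℂ) + 1)) ?_
      · exact h3
      · have : Tendsto (fun n : ℕ => ((n + n₀ : ℕ) : ℝ)) atTop atTop :=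
          tendsto_natCast_atTop_atTop.comp (tendsto_add_atTop_nat n₀)
        refine tendsto_atTop_mono (fun n => ?_) this
        have : (((n + n₀ : ℕ) : ℂ) + 1) = ((n + n₀ + 1 : ℕ) : ℂ) := by push_cast; ring
        rw [this, Complex.norm_natCast]
        push_cast; linarith
  have hF' : AEStronglyMeasurable (fun x => fderiv ℂ (fun p => F p x) p₀) volume := by
    have : (fun x => fderiv ℂ (fun p => F p x) p₀) = fun x =>
        (fderiv ℂ (fun p => F p x) p₀ (1, 0)) • ContinuousLinearMap.fst ℂ ℂ ℂ
        + (fderiv ℂ (fun p => F p x) p₀ (0, 1)) • ContinuousLinearMap.snd ℂ ℂ ℂ := by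
      ext x <;> simp
    rw [this]
    exact ((hdir _).smul_const _).add ((hdir _).smul_const _)
  have hR2 : 0 < R / 2 := by positivity
  have hsub : ∀ p ∈ Metric.ball p₀ (R / 2), Metric.ball p (R / 2) ⊆ Metric.ball p₀ R := by
    intro p hp
    apply Metric.ball_subset_ball'
    rw [Metric.mem_ball] at hp
    linarith
  refine (hasFDerivAt_integral_of_dominated_of_fderiv_le (𝕜 := ℂ)
    (F' := fun p x => fderiv ℂ (fun p => F p x) p) (bound := fun x => (2 * bound x) / (R / 2))
    (Metric.ball_mem_nhds p₀ hR2) ?_ ?_ hF' ?_ ?_ ?_).differentiableAt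
  · filter_upwards [Metric.ball_mem_nhds p₀ hR] with p hp using hm p hp
  · exact hi.mono' (hm p₀ hp₀) (Eventually.of_forall (hb p₀ hp₀))
  · refine Eventually.of_forall fun x p hp => ?_
    refine Complex.norm_fderiv_le_div_of_mapsTo_ball ((hd x).mono (hsub p hp)) ?_ hR2
    intro p' hp'
    rw [Metric.mem_closedBall, dist_eq_norm]
    have h1 := hb p' (hsub p hp hp') x
    have h2 := hb p (hsub p hp (Metric.mem_ball_self hR2)) x
    have h3 := norm_sub_le (F p' x) (F p x)
    simp only
    linarith
  · exact (hi.const_mul 2).div_const _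
  · refine Eventually.of_forall fun x p hp => ?_
    exact (hda x p (hsub p hp (Metric.mem_ball_self hR2))).hasFDerivAt

lemma s14T_re (τ : ℂ) (hτ : τ ≠ 0) (u : ℂ) (p : ℂ × ℂ) :
    (τ * (s14T τ u p).2) = τ * p.2 + u := by
  simp only [s14T]; field_simp

lemma s14T_line (τ : ℂ) (hτ : τ ≠ 0) (α β δ : ℝ) (x y : ℝ) (p : ℂ × ℂ)
    (h : s14T τ (y * I) p ∈ sectDom τ α β δ) : s14T τ (x + y * I) p ∈ sectDom τ α β δ := by
  rw [s14T_mem _ _ hτ] at h ⊢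
  simpa using h

lemma s14_int_shift (X : ℝ) : Integrable (fun x : ℝ => (1 + (X + x) ^ 2)⁻¹) := by
  have := integrable_inv_one_add_sq.comp_add_left X
  exact this

lemma s14_int_shift_val (X : ℝ) : ∫ x : ℝ, (1 + (X + x) ^ 2)⁻¹ = Real.pi := by
  have := integral_add_left_eq_self (μ := volume) (fun x : ℝ => (1 + x ^ 2)⁻¹) X
  rw [this, integral_univ_inv_one_add_sq]

lemma s14_near (X X₀ x : ℝ) (h : |X - X₀| ≤ 1) : (1 + (X + x) ^ 2)⁻¹ ≤ 3 * (1 + (X₀ + x) ^ 2)⁻¹ := by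
  rw [← div_eq_mul_inv, inv_le_comm₀ (by positivity) (by positivity), inv_div, div_le_iff₀ (by norm_num)]
  have := abs_le.1 h
  nlinarith [sq_nonneg ((X + x) + (X - X₀)), sq_nonneg ((X + x) - (X - X₀))]

/-- The integrand is continuous in `x`. -/
lemma s14_integrand_cont (τ : ℂ) (hτ : 0 < τ.im) (a b δ : ℝ) (Δ : ℂ × ℂ → ℂ)
    (hc : ContinuousOn Δ (sectDom τ a b δ)) (y : ℝ) (hy : ∀ n : ℤ, y ≠ n * τ.im)
    (p : ℂ × ℂ) (hp : s14T τ (y * I) p ∈ sectDom τ a b δ) :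
    Continuous (fun x : ℝ => Δ (s14T τ (x + y * I) p) * s14K τ (x + y * I)) := by
  have hτ0 : τ ≠ 0 := by rintro rfl; simp at hτ
  refine Continuous.mul ?_ (s14K_cont τ hτ y hy)
  refine hc.comp_continuous ((s14T_contu τ p).comp (by fun_prop)) ?_
  intro x
  exact s14T_line τ hτ0 _ _ _ _ _ _ hp

lemma s14_integrand_bound (τ : ℂ) (hτ : 0 < τ.im) (a b δ B κ : ℝ) (hB0 : 0 ≤ B)
    (Δ : ℂ × ℂ → ℂ)
    (hB : ∀ p ∈ sectDom τ a b δ, ‖Δ p‖ ≤ B * (1 + (τ * p.2).re ^ 2)⁻¹)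
    (y : ℝ) (hκ : ∀ x : ℝ, ‖s14K τ (x + y * I)‖ ≤ κ)
    (p : ℂ × ℂ) (hp : s14T τ (y * I) p ∈ sectDom τ a b δ) (x : ℝ) :
    ‖Δ (s14T τ (x + y * I) p) * s14K τ (x + y * I)‖ ≤
      B * κ * (1 + ((τ * p.2).re + x) ^ 2)⁻¹ := by
  have hτ0 : τ ≠ 0 := by rintro rfl; simp at hτ
  have h1 := hB _ (s14T_line τ hτ0 _ _ _ x _ _ hp)
  rw [s14T_re τ hτ0] at h1
  have h2 : (τ * p.2 + (x + y * I)).re = (τ * p.2).re + x := by simp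
  rw [h2] at h1
  rw [norm_mul]
  calc _ ≤ (B * (1 + ((τ * p.2).re + x) ^ 2)⁻¹) * κ :=
        mul_le_mul h1 (hκ x) (norm_nonneg _) (by positivity)
    _ = _ := by ring

lemma s14_integrable (τ : ℂ) (hτ : 0 < τ.im) (a b δ B : ℝ) (hB0 : 0 ≤ B)
    (Δ : ℂ × ℂ → ℂ) (hc : ContinuousOn Δ (sectDom τ a b δ))
    (hB : ∀ p ∈ sectDom τ a b δ, ‖Δ p‖ ≤ B * (1 + (τ * p.2).re ^ 2)⁻¹)
    (y : ℝ) (hy : ∀ n : ℤ, y ≠ n * τ.im)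
    (p : ℂ × ℂ) (hp : s14T τ (y * I) p ∈ sectDom τ a b δ) :
    Integrable (fun x : ℝ => Δ (s14T τ (x + y * I) p) * s14K τ (x + y * I)) := by
  obtain ⟨κ, hκ0, hκ⟩ := s14K_bound τ hτ y hy
  refine ((s14_int_shift (τ * p.2).re).const_mul (B * κ)).mono'
    (s14_integrand_cont τ hτ a b δ Δ hc y hy p hp).aestronglyMeasurable
    (Eventually.of_forall fun x => ?_)
  exact s14_integrand_bound τ hτ a b δ B κ hB0 Δ hB y (fun x => (hκ x).1) p hp x

lemma s14H_cont (τ : ℂ) (hτ : 0 < τ.im) (a b δ B : ℝ) (hB0 : 0 ≤ B)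
    (Δ : ℂ × ℂ → ℂ) (hc : ContinuousOn Δ (sectDom τ a b δ))
    (hB : ∀ p ∈ sectDom τ a b δ, ‖Δ p‖ ≤ B * (1 + (τ * p.2).re ^ 2)⁻¹)
    (y : ℝ) (hy : ∀ n : ℤ, y ≠ n * τ.im) :
    ContinuousOn (s14H τ Δ y) {p | s14T τ (y * I) p ∈ sectDom τ a b δ} := by
  have hτ0 : τ ≠ 0 := by rintro rfl; simp at hτ
  obtain ⟨κ, hκ0, hκ⟩ := s14K_bound τ hτ y hy
  intro p₀ hp₀
  refine ContinuousWithinAt.mul continuousWithinAt_const ?_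
  refine continuousWithinAt_of_dominated
    (bound := fun x => B * κ * (3 * (1 + ((τ * p₀.2).re + x) ^ 2)⁻¹)) ?_ ?_ ?_ ?_
  · filter_upwards [self_mem_nhdsWithin] with p hp
    exact (s14_integrand_cont τ hτ a b δ Δ hc y hy p hp).aestronglyMeasurable
  · have hcont : Continuous (fun p : ℂ × ℂ => |(τ * p.2).re - (τ * p₀.2).re|) := by fun_prop
    have hev : ∀ᶠ p in 𝓝 p₀, |(τ * p.2).re - (τ * p₀.2).re| < 1 := by
      apply hcont.continuousAt.eventually_lt continuousAt_const
      simp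
    filter_upwards [self_mem_nhdsWithin, mem_nhdsWithin_of_mem_nhds hev] with p hp hp2
    refine Eventually.of_forall fun x => ?_
    refine (s14_integrand_bound τ hτ a b δ B κ hB0 Δ hB y (fun x => (hκ x).1) p hp x).trans ?_
    exact mul_le_mul_of_nonneg_left (s14_near _ _ x hp2.le) (by positivity)
  · exact ((s14_int_shift _).const_mul 3).const_mul _
  · refine Eventually.of_forall fun x => ?_
    refine ContinuousWithinAt.mul ?_ continuousWithinAt_const
    refine (hc _ (s14T_line τ hτ0 _ _ _ x _ _ hp₀)).comp
      (s14T_contp τ _).continuousWithinAt ?_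
    intro p hp
    exact s14T_line τ hτ0 _ _ _ x _ _ hp

/-- Open version of the domain. -/
def s14O (τ : ℂ) (a b δ : ℝ) : Set (ℂ × ℂ) :=
  {p : ℂ × ℂ | a < ‖p.1‖ ∧ ‖p.1‖ < b ∧
    ‖p.1 * Complex.exp (2 * (Real.pi : ℂ) * Complex.I * τ * p.2)‖ < δ}

lemma s14O_open (τ : ℂ) (a b δ : ℝ) : IsOpen (s14O τ a b δ) := by
  have h1 : IsOpen {p : ℂ × ℂ | a < ‖p.1‖} := isOpen_lt (by fun_prop) (by fun_prop)
  have h2 : IsOpen {p : ℂ × ℂ | ‖p.1‖ < b} := isOpen_lt (by fun_prop) (by fun_prop)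
  have h3 : IsOpen {p : ℂ × ℂ |
    ‖p.1 * Complex.exp (2 * (Real.pi : ℂ) * Complex.I * τ * p.2)‖ < δ} :=
    isOpen_lt (by fun_prop) (by fun_prop)
  exact h1.inter (h2.inter h3)

lemma s14O_sub (τ : ℂ) (a b δ : ℝ) : s14O τ a b δ ⊆ sectDom τ a b δ :=
  fun _ hp => ⟨hp.1.le, hp.2.1.le, hp.2.2.le⟩

lemma s14O_int (τ : ℂ) (a b δ : ℝ) : s14O τ a b δ ⊆ interior (sectDom τ a b δ) :=
  interior_maximal (s14O_sub τ a b δ) (s14O_open τ a b δ)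

lemma s14T_memO (τ u : ℂ) (hτ : τ ≠ 0) (p : ℂ × ℂ) (α β δ : ℝ) :
    s14T τ u p ∈ s14O τ α β δ ↔ α < ‖p.1‖ * Real.exp (2 * Real.pi * u.im) ∧
      ‖p.1‖ * Real.exp (2 * Real.pi * u.im) < β ∧
      ‖p.1 * Complex.exp (2 * (Real.pi : ℂ) * Complex.I * τ * p.2)‖ < δ := by
  simp only [s14O, mem_ofPred_eq, s14T_w τ u hτ, s14T_fst]

lemma s14H_diff (τ : ℂ) (hτ : 0 < τ.im) (a b δ B : ℝ) (hB0 : 0 ≤ B)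
    (Δ : ℂ × ℂ → ℂ) (hc : ContinuousOn Δ (sectDom τ a b δ))
    (hd : DifferentiableOn ℂ Δ (interior (sectDom τ a b δ)))
    (hB : ∀ p ∈ sectDom τ a b δ, ‖Δ p‖ ≤ B * (1 + (τ * p.2).re ^ 2)⁻¹)
    (y : ℝ) (hy : ∀ n : ℤ, y ≠ n * τ.im) (p₀ : ℂ × ℂ)
    (hp₀ : s14T τ (y * I) p₀ ∈ s14O τ a b δ) :
    DifferentiableAt ℂ (s14H τ Δ y) p₀ := by
  have hτ0 : τ ≠ 0 := by rintro rfl; simp at hτ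
  obtain ⟨κ, hκ0, hκ⟩ := s14K_bound τ hτ y hy
  have hcont : Continuous (fun p : ℂ × ℂ => |(τ * p.2).re - (τ * p₀.2).re|) := by fun_prop
  have hev : ∀ᶠ p in 𝓝 p₀, |(τ * p.2).re - (τ * p₀.2).re| < 1 := by
    apply hcont.continuousAt.eventually_lt continuousAt_const
    simp
  have hev2 : ∀ᶠ p in 𝓝 p₀, s14T τ (y * I) p ∈ s14O τ a b δ :=
    (s14T_contp τ _).continuousAt.eventually ((s14O_open τ a b δ).mem_nhds hp₀)
  obtain ⟨R, hR, hball⟩ := Metric.eventually_nhds_iff_ball.1 (hev.and hev2)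
  refine DifferentiableAt.const_mul ?_ _
  refine s14_diff_integral _ p₀ R hR
    (fun x => B * κ * (3 * (1 + ((τ * p₀.2).re + x) ^ 2)⁻¹)) ?_ ?_ ?_ ?_
  · intro x
    refine DifferentiableOn.mul_const ?_ _
    intro p hp
    have h1 := (hball p hp).2
    have h2 : s14T τ (x + y * I) p ∈ s14O τ a b δ := by
      rw [s14T_memO _ _ hτ0] at h1 ⊢
      simpa using h1
    have h3 := (hd.differentiableAt (mem_interior_iff_mem_nhds.1 (by
      rw [interior_interior]; exact s14O_int τ a b δ h2)))
    exact (h3.comp p (s14T_diffp τ _ p)).differentiableWithinAt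
  · intro p hp
    exact (s14_integrand_cont τ hτ a b δ Δ hc y hy p
      (s14O_sub _ _ _ _ (hball p hp).2)).aestronglyMeasurable
  · intro p hp x
    refine (s14_integrand_bound τ hτ a b δ B κ hB0 Δ hB y (fun x => (hκ x).1) p
      (s14O_sub _ _ _ _ (hball p hp).2) x).trans ?_
    exact mul_le_mul_of_nonneg_left (s14_near _ _ x (hball p hp).1.le) (by positivity)
  · exact ((s14_int_shift _).const_mul 3).const_mul _

end S14

section S14

open Set Filter Topology MeasureTheory

lemma s14_inv_int (y R : ℝ) (hy : y ≠ 0) :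
    ∫ x in (-R)..R, ((x : ℂ) + y * I)⁻¹ = -2 * I * (Real.arctan (R / y) : ℂ) := by
  have hne : ∀ x : ℝ, (x : ℂ) + y * I ≠ 0 := by
    intro x h
    apply hy
    have := congrArg Complex.im h
    simpa using this
  have hder : ∀ x : ℝ, HasDerivAt (fun x : ℝ => (((1 / 2) * Real.log (x ^ 2 + y ^ 2) : ℝ) : ℂ)
      - I * ((Real.arctan (x / y) : ℝ) : ℂ)) (((x : ℂ) + y * I)⁻¹) x := by
    intro x
    have hpos : 0 < x ^ 2 + y ^ 2 := by positivity
    have h1 : HasDerivAt (fun x : ℝ => (1 / 2) * Real.log (x ^ 2 + y ^ 2))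
        ((1 / 2) * ((2 * x) / (x ^ 2 + y ^ 2))) x := by
      have h0 : HasDerivAt (fun x : ℝ => x ^ 2 + y ^ 2) (2 * x) x := by
        simpa using (hasDerivAt_pow 2 x).add_const (y ^ 2)
      exact (h0.log hpos.ne').const_mul _
    have h2 : HasDerivAt (fun x : ℝ => Real.arctan (x / y))
        (1 / (1 + (x / y) ^ 2) * (1 / y)) x := by
      exact ((hasDerivAt_id x).div_const y).arctan
    refine (h1.ofReal_comp.sub (h2.ofReal_comp.const_mul I)).congr_deriv ?_
    have e1 : (1 / (1 + (x / y) ^ 2) * (1 / y)) = y / (x ^ 2 + y ^ 2) := by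
      field_simp; ring
    rw [e1]
    have hC : (x : ℂ) ^ 2 + (y : ℂ) ^ 2 ≠ 0 := by exact_mod_cast hpos.ne'
    apply eq_inv_of_mul_eq_one_left
    push_cast
    field_simp
    linear_combination (-(y : ℂ) ^ 2) * Complex.I_sq
  rw [intervalIntegral.integral_eq_sub_of_hasDerivAt (fun x _ => hder x)]
  · rw [neg_div, Real.arctan_neg]; push_cast; ring
  · apply Continuous.intervalIntegrable
    apply Continuous.inv₀ (by fun_prop) hne

lemma s14_jump_aux (τ : ℂ) (hτ : 0 < τ.im) (a b δ B : ℝ) (ha : 0 < a) (hB0 : 0 ≤ B)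
    (Δ : ℂ × ℂ → ℂ) (hc : ContinuousOn Δ (sectDom τ a b δ))
    (hd : DifferentiableOn ℂ Δ (interior (sectDom τ a b δ)))
    (hB : ∀ p ∈ sectDom τ a b δ, ‖Δ p‖ ≤ B * (1 + (τ * p.2).re ^ 2)⁻¹)
    (y₁ y₂ : ℝ) (h1 : -τ.im < y₁) (h1' : y₁ < 0) (h2 : 0 < y₂) (h2' : y₂ < τ.im) (p : ℂ × ℂ)
    (hp1 : a ≤ ‖p.1‖ * Real.exp (2 * Real.pi * y₁))
    (hp2 : ‖p.1‖ * Real.exp (2 * Real.pi * y₂) ≤ b)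
    (hw : ‖p.1 * Complex.exp (2 * (Real.pi : ℂ) * Complex.I * τ * p.2)‖ < δ) :
    s14H τ Δ y₁ p - s14H τ Δ y₂ p = Δ p := by
  have hτ0 : τ ≠ 0 := by rintro rfl; simp at hτ
  have hpi : (Real.pi : ℂ) ≠ 0 := by exact_mod_cast Real.pi_ne_zero
  have hn : 0 < Complex.normSq τ := Complex.normSq_pos.2 hτ0
  have hp0 : 0 < ‖p.1‖ := by
    by_contra hcon
    have : ‖p.1‖ = 0 := le_antisymm (not_lt.1 hcon) (norm_nonneg _)
    rw [this] at hp1; linarith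
  have hmem : ∀ u : ℂ, y₁ ≤ u.im → u.im ≤ y₂ → s14T τ u p ∈ sectDom τ a b δ := by
    intro u hu1 hu2
    rw [s14T_mem _ _ hτ0]
    refine ⟨hp1.trans ?_, le_trans ?_ hp2, hw.le⟩ <;> gcongr
  have hmemO : ∀ u : ℂ, y₁ < u.im → u.im < y₂ → s14T τ u p ∈ s14O τ a b δ := by
    intro u hu1 hu2
    rw [s14T_memO _ _ hτ0]
    refine ⟨hp1.trans_lt ?_, lt_of_lt_of_le ?_ hp2, hw⟩ <;> gcongr
  set G : ℂ → ℂ := fun u => Δ (s14T τ u p) with hG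
  have hGc : ContinuousOn G {u | y₁ ≤ u.im ∧ u.im ≤ y₂} :=
    hc.comp (s14T_contu τ p).continuousOn (fun u hu => hmem u hu.1 hu.2)
  have hGd : ∀ u : ℂ, y₁ < u.im → u.im < y₂ → DifferentiableAt ℂ G u := by
    intro u hu1 hu2
    have h3 := (hd.differentiableAt (mem_interior_iff_mem_nhds.1 (by
      rw [interior_interior]; exact s14O_int τ a b δ (hmemO u hu1 hu2))))
    exact h3.comp u (s14T_diffu τ p u)
  set E : ℂ → ℂ := fun u => Complex.exp (2 * (Real.pi : ℂ) * Complex.I * u / τ) with hE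
  have hEd : Differentiable ℂ E := by rw [hE]; fun_prop
  have hE0 : E 0 = 1 := by simp [hE]
  have hE'0 : deriv E 0 = 2 * (Real.pi : ℂ) * Complex.I / τ := by
    have : HasDerivAt E (Complex.exp (2 * (Real.pi : ℂ) * Complex.I * 0 / τ)
        * ((2 * (Real.pi : ℂ) * Complex.I * 1) / τ)) 0 :=
      (((hasDerivAt_id (0 : ℂ)).const_mul (2 * (Real.pi : ℂ) * Complex.I)).div_const τ).cexp
    rw [this.deriv]; simp
  set M : ℂ → ℂ := fun u => (dslope E 0 u)⁻¹ with hM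
  have hMK : ∀ u, u ≠ 0 → M u = u * s14K τ u := by
    intro u hu
    simp only [hM, dslope_of_ne E hu, slope_def_field, hE0, sub_zero, s14K, inv_div]
    rfl
  have hM0 : M 0 = τ / (2 * (Real.pi : ℂ) * Complex.I) := by
    simp only [hM, dslope_same, hE'0, inv_div]
  have hEsl : Differentiable ℂ (dslope E 0) := by
    rw [← differentiableOn_univ]
    exact (Complex.differentiableOn_dslope univ_mem).2 hEd.differentiableOn
  have hMd : ∀ u : ℂ, y₁ ≤ u.im → u.im ≤ y₂ → DifferentiableAt ℂ M u := by
    intro u hu1 hu2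
    refine (hEsl u).inv ?_
    by_cases hu : u = 0
    · rw [hu, dslope_same, hE'0]
      simp [hpi, hτ0]
    · rw [dslope_of_ne E hu, slope_def_field, hE0, sub_zero]
      refine div_ne_zero ?_ hu
      intro h0
      simp only [hE, sub_eq_zero, Complex.exp_eq_one_iff] at h0
      obtain ⟨n, hn⟩ := h0
      have hu' : u = n * τ := by
        field_simp at hn
        rw [hn]; ring
      have him : u.im = n * τ.im := by rw [hu']; simp
      have b1 : (-1 : ℝ) < n := by
        by_contra hcon; push Not at hcon; nlinarith
      have b2 : (n : ℝ) < 1 := by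
        by_contra hcon; push Not at hcon; nlinarith
      have b1' : (-1 : ℤ) < n := by exact_mod_cast b1
      have b2' : n < 1 := by exact_mod_cast b2
      have : n = 0 := by omega
      apply hu; rw [hu', this]; simp
  set N : ℂ → ℂ := fun u => G u * M u with hN
  set D : ℂ → ℂ := dslope N 0 with hD
  have hDne : ∀ u, u ≠ 0 → D u = G u * s14K τ u - N 0 * u⁻¹ := by
    intro u hu
    simp only [hD, dslope_of_ne N hu, slope_def_field, sub_zero]
    have : N u = G u * (u * s14K τ u) := by simp only [hN, hMK u hu]
    rw [this]; field_simp
  have hN0 : N 0 = Δ p * (τ / (2 * (Real.pi : ℂ) * Complex.I)) := by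
    simp only [hN, hM0, hG, s14T_zero]
  have hstrip : {u : ℂ | y₁ ≤ u.im ∧ u.im ≤ y₂} ∈ 𝓝 (0 : ℂ) := by
    have : {u : ℂ | y₁ < u.im ∧ u.im < y₂} ∈ 𝓝 (0 : ℂ) := by
      refine (IsOpen.inter (isOpen_lt continuous_const Complex.continuous_im)
        (isOpen_lt Complex.continuous_im continuous_const)).mem_nhds ?_
      exact ⟨by simpa using h1', by simpa using h2⟩
    exact mem_of_superset this fun u hu => ⟨hu.1.le, hu.2.le⟩
  have hDc : ContinuousOn D {u : ℂ | y₁ ≤ u.im ∧ u.im ≤ y₂} := by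
    rw [hD, continuousOn_dslope hstrip]
    refine ⟨hGc.mul fun u hu => (hMd u hu.1 hu.2).continuousAt.continuousWithinAt, ?_⟩
    exact (hGd 0 (by simpa using h1') (by simpa using h2)).mul
      (hMd 0 (by simpa using h1'.le) (by simpa using h2.le))
  have hw1 : ∀ n : ℤ, y₁ ≠ n * τ.im := s14_window τ.im y₁ (-1) (by push_cast; linarith) (by push_cast; linarith)
  have hw2 : ∀ n : ℤ, y₂ ≠ n * τ.im := s14_window τ.im y₂ 0 (by push_cast; linarith) (by push_cast; linarith)
  have hm1 : s14T τ (y₁ * I) p ∈ sectDom τ a b δ := hmem _ (by simp) (by simpa using (h1'.trans h2).le)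
  have hm2 : s14T τ (y₂ * I) p ∈ sectDom τ a b δ := hmem _ (by simpa using (h1'.trans h2).le) (by simp)
  have hline : ∀ y : ℝ, y ≠ 0 → (∀ n : ℤ, y ≠ n * τ.im) → s14T τ (y * I) p ∈ sectDom τ a b δ →
      ∀ R : ℝ, ∫ x in (-R)..R, D (x + y * I) =
        (∫ x in (-R)..R, G (x + y * I) * s14K τ (x + y * I))
          - N 0 * (-2 * I * (Real.arctan (R / y) : ℂ)) := by
    intro y hy hyn hym R
    have hne : ∀ x : ℝ, (x : ℂ) + y * I ≠ 0 := by
      intro x h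
      apply hy
      have := congrArg Complex.im h
      simpa using this
    rw [← s14_inv_int y R hy, ← intervalIntegral.integral_const_mul,
      ← intervalIntegral.integral_sub]
    · exact intervalIntegral.integral_congr fun x _ => hDne _ (hne x)
    · exact (s14_integrand_cont τ hτ a b δ Δ hc y hyn p hym).intervalIntegrable _ _
    · apply Continuous.intervalIntegrable
      exact continuous_const.mul (Continuous.inv₀ (by fun_prop) hne)
  have hrect : ∀ R : ℝ, 0 < R →
      (∫ x in (-R)..R, D (x + y₁ * I)) - (∫ x in (-R)..R, D (x + y₂ * I))
        + I • (∫ y in y₁..y₂, D ((1 * R : ℝ) + y * I))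
        - I • (∫ y in y₁..y₂, D ((-1 * R : ℝ) + y * I)) = 0 := by
    intro R hR
    have h12 := h1'.trans h2
    have := Complex.integral_boundary_rect_eq_zero_of_differentiable_on_off_countable D
      (-R + y₁ * I) (R + y₂ * I) {0} (countable_singleton 0) ?_ ?_
    · simpa using this
    · refine hDc.mono ?_
      rintro u ⟨_, hu⟩
      simp only [mem_preimage] at hu
      simp [uIcc_of_le h12.le] at hu
      exact hu
    · rintro u ⟨⟨_, hu⟩, hu0⟩
      simp only [mem_preimage] at hu
      simp [h12.le] at hu
      simp only [mem_singleton_iff] at hu0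
      rw [hD, differentiableAt_dslope_of_ne hu0]
      exact (hGd u hu.1 hu.2).mul (hMd u hu.1.le hu.2.le)
  have hside : ∀ s : ℝ, |s| = 1 → Tendsto (fun R : ℝ => ∫ y in y₁..y₂, D ((s * R : ℝ) + y * I))
      atTop (𝓝 0) := by
    intro s hs
    have hs2 : s ^ 2 = 1 := by rw [← sq_abs, hs]; norm_num
    set X := (τ * p.2).re
    have hbd : Tendsto (fun R : ℝ => (B * 2 * (1 + (X + s * R) ^ 2)⁻¹ + ‖N 0‖ * R⁻¹) * |y₂ - y₁|)
        atTop (𝓝 0) := by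
      have t1 : Tendsto (fun R : ℝ => (1 + (X + s * R) ^ 2)⁻¹) atTop (𝓝 0) := by
        apply Filter.Tendsto.inv_tendsto_atTop
        have t0 : Tendsto (fun R : ℝ => R - |X|) atTop atTop :=
          tendsto_atTop_add_const_right _ _ tendsto_id
        refine tendsto_atTop_mono' _ ?_ t0
        filter_upwards with R
        have e1 : (R - |X|) ≤ |X + s * R| := by
          have h5 := abs_sub_abs_le_abs_sub (s * R) (-X)
          rw [abs_mul, hs, one_mul, abs_neg, sub_neg_eq_add, add_comm (s * R)] at h5
          have := le_abs_self R
          linarith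
        rw [← sq_abs (X + s * R)]
        nlinarith [sq_nonneg (|X + s * R| - 1)]
      have t2 : Tendsto (fun R : ℝ => R⁻¹) atTop (𝓝 0) := tendsto_inv_atTop_zero
      have := ((t1.const_mul (B * 2)).add (t2.const_mul ‖N 0‖)).mul_const |y₂ - y₁|
      simpa using this
    refine squeeze_zero_norm' ?_ hbd
    filter_upwards [eventually_ge_atTop ((Complex.normSq τ + τ.im * |τ.re|) / τ.im),
      eventually_gt_atTop 0] with R hR hR0
    refine intervalIntegral.norm_integral_le_of_norm_le_const ?_
    intro y hy
    rw [uIoc_of_le (h1'.trans h2).le] at hy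
    have hR1 : ‖((s * R : ℝ) + y * I : ℂ)‖ ≥ R := by
      have := Complex.abs_re_le_norm ((s * R : ℝ) + y * I : ℂ)
      simp only [Complex.add_re, Complex.ofReal_re, Complex.mul_re, Complex.I_re, mul_zero,
        Complex.ofReal_im, Complex.I_im, mul_one, sub_self, add_zero, abs_mul, hs, one_mul] at this
      exact (le_abs_self R).trans this
    have hne : ((s * R : ℝ) + y * I : ℂ) ≠ 0 := by
      rw [← norm_pos_iff]; linarith
    rw [hDne _ hne]
    refine (norm_sub_le _ _).trans (add_le_add ?_ ?_)
    · have g1 : ‖G ((s * R : ℝ) + y * I)‖ ≤ B * (1 + (X + s * R) ^ 2)⁻¹ := by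
        have := hB _ (hmem ((s * R : ℝ) + y * I) (by simpa using hy.1.le) (by simpa using hy.2))
        rw [s14T_re τ hτ0] at this
        have hre : (τ * p.2 + ((s * R : ℝ) + y * I)).re = X + s * R := by simp [X]
        rw [hre] at this
        exact this
      have g2 : ‖s14K τ ((s * R : ℝ) + y * I)‖ ≤ 2 := by
        apply s14K_far
        rw [s14im_div, abs_div, abs_of_pos hn, le_div_iff₀ hn, one_mul]
        rw [div_le_iff₀ hτ] at hR
        have h6 := abs_sub_abs_le_abs_sub (s * R * τ.im) (y * τ.re)
        rw [abs_mul (s * R), abs_mul s, hs, one_mul, abs_of_pos hτ, abs_of_pos hR0, abs_sub_comm] at h6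
        have h7 : |y * τ.re| ≤ τ.im * |τ.re| := by
          rw [abs_mul]
          refine mul_le_mul_of_nonneg_right ?_ (abs_nonneg _)
          rw [abs_le]; constructor <;> linarith [hy.1, hy.2]
        linarith
      rw [norm_mul]
      calc _ ≤ (B * (1 + (X + s * R) ^ 2)⁻¹) * 2 :=
            mul_le_mul g1 g2 (norm_nonneg _) (by positivity)
        _ = _ := by ring
    · rw [norm_mul, norm_inv]
      gcongr
  have hJ : ∀ y : ℝ, (∀ n : ℤ, y ≠ n * τ.im) → s14T τ (y * I) p ∈ sectDom τ a b δ →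
      Tendsto (fun R : ℝ => ∫ x in (-R)..R, G (x + y * I) * s14K τ (x + y * I)) atTop
        (𝓝 (τ * s14H τ Δ y p)) := by
    intro y hyn hym
    have e : τ * s14H τ Δ y p = ∫ x : ℝ, G (x + y * I) * s14K τ (x + y * I) := by
      rw [s14H, ← mul_assoc, mul_inv_cancel₀ hτ0, one_mul]
    rw [e]
    exact intervalIntegral_tendsto_integral
      (s14_integrable τ hτ a b δ B hB0 Δ hc hB y hyn p hym) tendsto_neg_atTop_atBot tendsto_id
  have hat1 : Tendsto (fun R : ℝ => (Real.arctan (R / y₁) : ℂ)) atTop (𝓝 ((-(Real.pi / 2) : ℝ) : ℂ)) := by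
    refine (Complex.continuous_ofReal.tendsto _).comp ?_
    exact (tendsto_nhds_of_tendsto_nhdsWithin Real.tendsto_arctan_atBot).comp
      (tendsto_id.atTop_div_const_of_neg h1')
  have hat2 : Tendsto (fun R : ℝ => (Real.arctan (R / y₂) : ℂ)) atTop (𝓝 ((Real.pi / 2 : ℝ) : ℂ)) := by
    refine (Complex.continuous_ofReal.tendsto _).comp ?_
    exact (tendsto_nhds_of_tendsto_nhdsWithin Real.tendsto_arctan_atTop).comp
      (tendsto_id.atTop_div_const h2)
  have hlim := ((((hJ y₁ hw1 hm1).sub ((hat1.const_mul (-2 * I)).const_mul (N 0))).sub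
    ((hJ y₂ hw2 hm2).sub ((hat2.const_mul (-2 * I)).const_mul (N 0)))).add
      ((hside 1 (by simp)).const_smul I)).sub ((hside (-1) (by simp)).const_smul I)
  have hzero := tendsto_nhds_unique_of_eventuallyEq hlim tendsto_const_nhds (b := (0 : ℂ)) (by
    filter_upwards [eventually_gt_atTop 0] with R hR
    have := hrect R hR
    rw [hline y₁ h1'.ne hw1 hm1, hline y₂ h2.ne' hw2 hm2] at this
    exact this)
  rw [hN0] at hzero
  have hI : I ≠ 0 := Complex.I_ne_zero
  have : τ * (s14H τ Δ y₁ p - s14H τ Δ y₂ p) = τ * Δ p := by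
    have e : Δ p * (τ / (2 * (Real.pi : ℂ) * Complex.I)) * (2 * Real.pi * I) = τ * Δ p := by
      field_simp
    push_cast at hzero
    simp only [smul_zero] at hzero
    linear_combination hzero + e
  exact mul_left_cancel₀ hτ0 this

/-- Density: a function continuous on the domain vanishing for `|w| < δ` vanishes. -/
lemma s14_dense (τ : ℂ) (hτ : τ ≠ 0) (δ : ℝ) (hδ : 0 < δ) (Z : Set (ℂ × ℂ)) (f : ℂ × ℂ → ℂ)
    (hf : ContinuousOn f Z)
    (hZ : ∀ p ∈ Z, ‖p.1 * Complex.exp (2 * (Real.pi : ℂ) * Complex.I * τ * p.2)‖ ≤ δ)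
    (hZ2 : ∀ p ∈ Z, ∀ ε : ℝ, 0 < ε → (p.1, p.2 + ε * I / τ) ∈ Z)
    (h0 : ∀ p ∈ Z, ‖p.1 * Complex.exp (2 * (Real.pi : ℂ) * Complex.I * τ * p.2)‖ < δ → f p = 0)
    (p : ℂ × ℂ) (hp : p ∈ Z) : f p = 0 := by
  have hlim : Tendsto (fun ε : ℝ => (p.1, p.2 + ε * I / τ)) (𝓝[>] 0) (𝓝[Z] p) := by
    refine tendsto_nhdsWithin_iff.2 ⟨?_, ?_⟩
    · have hcont : Continuous (fun ε : ℝ => (p.1, p.2 + ε * I / τ)) := by fun_prop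
      have := hcont.tendsto 0
      simp at this
      exact this.mono_left nhdsWithin_le_nhds
    · filter_upwards [self_mem_nhdsWithin] with ε hε using hZ2 p hp ε hε
  have h1 := (hf p hp).tendsto.comp hlim
  refine tendsto_nhds_unique_of_eventuallyEq h1 tendsto_const_nhds ?_
  filter_upwards [self_mem_nhdsWithin] with ε hε
  have hε' : (0 : ℝ) < ε := hε
  refine h0 _ (hZ2 p hp ε hε) ?_
  simp only
  have e : Complex.exp (2 * (Real.pi : ℂ) * Complex.I * τ * (p.2 + ε * I / τ))
      = Complex.exp (2 * (Real.pi : ℂ) * Complex.I * τ * p.2) * ((Real.exp (-(2 * Real.pi * ε)) : ℝ) : ℂ) := by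
    rw [Complex.ofReal_exp, ← Complex.exp_add]
    congr 1
    field_simp
    push_cast
    linear_combination (2 * (Real.pi : ℂ) * ε) * Complex.I_sq
  rw [e, ← mul_assoc, norm_mul, Complex.norm_real, Real.norm_of_nonneg (Real.exp_pos _).le]
  have hlt : Real.exp (-(2 * Real.pi * ε)) < 1 := by
    rw [Real.exp_lt_one_iff]
    have := mul_pos (mul_pos two_pos Real.pi_pos) hε'
    linarith
  have h3 := hZ p hp
  have h4 := norm_nonneg (p.1 * Complex.exp (2 * (Real.pi : ℂ) * Complex.I * τ * p.2))
  have h5 := Real.exp_pos (-(2 * Real.pi * ε))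
  nlinarith

lemma s14_w_up (τ : ℂ) (hτ : τ ≠ 0) (p : ℂ × ℂ) (ε : ℝ) (hε : 0 < ε) :
    ‖p.1 * Complex.exp (2 * (Real.pi : ℂ) * Complex.I * τ * (p.2 + ε * I / τ))‖ ≤
    ‖p.1 * Complex.exp (2 * (Real.pi : ℂ) * Complex.I * τ * p.2)‖ := by
  rw [norm_mul, norm_mul]
  refine mul_le_mul_of_nonneg_left ?_ (norm_nonneg _)
  rw [Complex.norm_exp, Complex.norm_exp, Real.exp_le_exp]
  have : 2 * (Real.pi : ℂ) * Complex.I * τ * (p.2 + ε * I / τ)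
      = 2 * (Real.pi : ℂ) * Complex.I * τ * p.2 - ((2 * Real.pi * ε : ℝ) : ℂ) := by
    field_simp
    push_cast
    linear_combination (2 * (Real.pi : ℂ) * ε) * Complex.I_sq
  rw [this, Complex.sub_re, Complex.ofReal_re]
  have := mul_pos (mul_pos two_pos Real.pi_pos) hε
  linarith

lemma s14_jump (τ : ℂ) (hτ : 0 < τ.im) (a b δ B : ℝ) (ha : 0 < a) (hδ : 0 < δ) (hB0 : 0 ≤ B)
    (Δ : ℂ × ℂ → ℂ) (hc : ContinuousOn Δ (sectDom τ a b δ))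
    (hd : DifferentiableOn ℂ Δ (interior (sectDom τ a b δ)))
    (hB : ∀ p ∈ sectDom τ a b δ, ‖Δ p‖ ≤ B * (1 + (τ * p.2).re ^ 2)⁻¹)
    (y₁ y₂ : ℝ) (h1 : -τ.im < y₁) (h1' : y₁ < 0) (h2 : 0 < y₂) (h2' : y₂ < τ.im) (p : ℂ × ℂ)
    (hp1 : a ≤ ‖p.1‖ * Real.exp (2 * Real.pi * y₁))
    (hp2 : ‖p.1‖ * Real.exp (2 * Real.pi * y₂) ≤ b)
    (hw : ‖p.1 * Complex.exp (2 * (Real.pi : ℂ) * Complex.I * τ * p.2)‖ ≤ δ) :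
    s14H τ Δ y₁ p - s14H τ Δ y₂ p = Δ p := by
  have hτ0 : τ ≠ 0 := by rintro rfl; simp at hτ
  have hw1 : ∀ n : ℤ, y₁ ≠ n * τ.im := s14_window τ.im y₁ (-1) (by push_cast; linarith) (by push_cast; linarith)
  have hw2 : ∀ n : ℤ, y₂ ≠ n * τ.im := s14_window τ.im y₂ 0 (by push_cast; linarith) (by push_cast; linarith)
  have hmem : ∀ p : ℂ × ℂ, a ≤ ‖p.1‖ * Real.exp (2 * Real.pi * y₁) →
      ‖p.1‖ * Real.exp (2 * Real.pi * y₂) ≤ b →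
      ‖p.1 * Complex.exp (2 * (Real.pi : ℂ) * Complex.I * τ * p.2)‖ ≤ δ →
      ∀ u : ℂ, y₁ ≤ u.im → u.im ≤ y₂ → s14T τ u p ∈ sectDom τ a b δ := by
    intro p hp1 hp2 hw u hu1 hu2
    rw [s14T_mem _ _ hτ0]
    refine ⟨hp1.trans ?_, le_trans ?_ hp2, hw⟩ <;> gcongr
  have := s14_dense τ hτ0 δ hδ {p | a ≤ ‖p.1‖ * Real.exp (2 * Real.pi * y₁) ∧
      ‖p.1‖ * Real.exp (2 * Real.pi * y₂) ≤ b ∧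
      ‖p.1 * Complex.exp (2 * (Real.pi : ℂ) * Complex.I * τ * p.2)‖ ≤ δ}
      (fun p => s14H τ Δ y₁ p - s14H τ Δ y₂ p - Δ p) ?_ (fun p hp => hp.2.2) ?_ ?_ p ⟨hp1, hp2, hw⟩
  · exact sub_eq_zero.1 this
  · refine ContinuousOn.sub (ContinuousOn.sub ?_ ?_) ?_
    · refine (s14H_cont τ hτ a b δ B hB0 Δ hc hB y₁ hw1).mono fun p hp => ?_
      exact hmem p hp.1 hp.2.1 hp.2.2 _ (by simp) (by simpa using (h1'.trans h2).le)
    · refine (s14H_cont τ hτ a b δ B hB0 Δ hc hB y₂ hw2).mono fun p hp => ?_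
      exact hmem p hp.1 hp.2.1 hp.2.2 _ (by simpa using (h1'.trans h2).le) (by simp)
    · refine hc.mono fun p hp => ?_
      have := hmem p hp.1 hp.2.1 hp.2.2 0 (by simpa using h1'.le) (by simpa using h2.le)
      rwa [s14T_zero] at this
  · intro p hp ε hε
    exact ⟨hp.1, hp.2.1, (s14_w_up τ hτ0 p ε hε).trans hp.2.2⟩
  · intro p hp hlt
    rw [s14_jump_aux τ hτ a b δ B ha hB0 Δ hc hd hB y₁ y₂ h1 h1' h2 h2' p hp.1 hp.2.1 hlt, sub_self]

end S14

section S14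

open Set Filter Topology MeasureTheory

lemma s14_w_shift (τ : ℂ) (hτ : τ ≠ 0) (p : ℂ × ℂ) (ε : ℝ) :
    ‖p.1 * Complex.exp (2 * (Real.pi : ℂ) * Complex.I * τ * (p.2 + ε * I / τ))‖ =
    ‖p.1 * Complex.exp (2 * (Real.pi : ℂ) * Complex.I * τ * p.2)‖ * Real.exp (-(2 * Real.pi * ε)) := by
  have e : Complex.exp (2 * (Real.pi : ℂ) * Complex.I * τ * (p.2 + ε * I / τ))
      = Complex.exp (2 * (Real.pi : ℂ) * Complex.I * τ * p.2) * ((Real.exp (-(2 * Real.pi * ε)) : ℝ) : ℂ) := by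
    rw [Complex.ofReal_exp, ← Complex.exp_add]
    congr 1
    field_simp
    push_cast
    linear_combination (2 * (Real.pi : ℂ) * ε) * Complex.I_sq
  rw [e, ← mul_assoc, norm_mul, Complex.norm_real, Real.norm_of_nonneg (Real.exp_pos _).le]

lemma s14_int_O (τ : ℂ) (hτ : τ ≠ 0) (α β δ : ℝ) (hα : 0 < α) :
    interior (sectDom τ α β δ) ⊆ s14O τ α β δ := by
  intro p hp
  have hpS : p ∈ sectDom τ α β δ := interior_subset hp
  have hnh : sectDom τ α β δ ∈ 𝓝 p := mem_interior_iff_mem_nhds.1 hp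
  have hz : 0 < ‖p.1‖ := hα.trans_le hpS.1
  have hpi := Real.pi_pos
  have c1 : Continuous (fun y : ℝ => s14T τ (y * I) p) := (s14T_contu τ p).comp (by fun_prop)
  have ev1 : ∀ᶠ y : ℝ in 𝓝 0, s14T τ (y * I) p ∈ sectDom τ α β δ := by
    refine c1.continuousAt.eventually ?_
    simpa [s14T_zero] using hnh
  have c2 : Continuous (fun y : ℝ => (p.1, p.2 + y * I / τ)) := by fun_prop
  have ev2 : ∀ᶠ y : ℝ in 𝓝 0, (p.1, p.2 + y * I / τ) ∈ sectDom τ α β δ := by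
    refine c2.continuousAt.eventually ?_
    simpa using hnh
  have hexp1 : ∀ y : ℝ, 0 < y → 1 < Real.exp (2 * Real.pi * y) := fun y hy => by
    rw [Real.one_lt_exp_iff]; positivity
  have hexp2 : ∀ y : ℝ, y < 0 → Real.exp (2 * Real.pi * y) < 1 := fun y hy => by
    rw [Real.exp_lt_one_iff]; nlinarith
  have ev1p : ∀ᶠ y : ℝ in 𝓝[>] 0, s14T τ (y * I) p ∈ sectDom τ α β δ :=
    ev1.filter_mono nhdsWithin_le_nhds
  have ev1n : ∀ᶠ y : ℝ in 𝓝[<] 0, s14T τ (y * I) p ∈ sectDom τ α β δ :=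
    ev1.filter_mono nhdsWithin_le_nhds
  have ev2n : ∀ᶠ y : ℝ in 𝓝[<] 0, (p.1, p.2 + y * I / τ) ∈ sectDom τ α β δ :=
    ev2.filter_mono nhdsWithin_le_nhds
  refine ⟨?_, ?_, ?_⟩
  · obtain ⟨y, hy, hy0⟩ := (ev1n.and self_mem_nhdsWithin).exists
    rw [s14T_mem _ _ hτ] at hy
    have h1 := hy.1
    simp only [Complex.mul_im, Complex.ofReal_re, Complex.I_im, Complex.ofReal_im, Complex.I_re,
      mul_one, mul_zero, add_zero] at h1
    have := hexp2 y hy0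
    nlinarith
  · obtain ⟨y, hy, hy0⟩ := (ev1p.and self_mem_nhdsWithin).exists
    rw [s14T_mem _ _ hτ] at hy
    have h1 := hy.2.1
    simp only [Complex.mul_im, Complex.ofReal_re, Complex.I_im, Complex.ofReal_im, Complex.I_re,
      mul_one, mul_zero, add_zero] at h1
    have := hexp1 y hy0
    nlinarith
  · obtain ⟨y, hy, hy0⟩ := (ev2n.and self_mem_nhdsWithin).exists
    have h1 := hy.2.2
    simp only at h1
    rw [s14_w_shift τ hτ] at h1
    have h2 := hexp1 (-y) (by simpa using hy0)
    rw [mul_neg] at h2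
    have h3 : 0 < ‖p.1 * Complex.exp (2 * (Real.pi : ℂ) * Complex.I * τ * p.2)‖ := by
      rw [norm_mul]; exact mul_pos hz (norm_pos_iff.2 (Complex.exp_ne_zero _))
    nlinarith

lemma s14_uniq_aux (τ : ℂ) (hτ : 0 < τ.im) (a b δ : ℝ) (ha : 0 < a) (hab : a < b)
    (haqb : a < Real.exp (-(2 * Real.pi * τ.im)) * b) (D : ℂ × ℂ → ℂ)
    (hd : DifferentiableOn ℂ D (interior (sectDom τ (Real.exp (-(2 * Real.pi * τ.im)) * a) b δ)))
    (M : ℝ) (hM : ∀ p ∈ sectDom τ (Real.exp (-(2 * Real.pi * τ.im)) * a) b δ, ‖D p‖ ≤ M)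
    (hper : ∀ p ∈ sectDom τ a b δ, D (s14T τ (-τ) p) = D p)
    (M' : ℝ) (hM' : ∀ p ∈ sectDom τ (Real.exp (-(2 * Real.pi * τ.im)) * a) b δ, 1 ≤ p.2.im →
      ‖D p‖ * Real.sqrt p.2.im ≤ M')
    (p : ℂ × ℂ) (hp : p ∈ sectDom τ (Real.exp (-(2 * Real.pi * τ.im)) * a) b δ)
    (hw : ‖p.1 * Complex.exp (2 * (Real.pi : ℂ) * Complex.I * τ * p.2)‖ < δ) : D p = 0 := by
  have hτ0 : τ ≠ 0 := by rintro rfl; simp at hτ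
  have hn : 0 < Complex.normSq τ := Complex.normSq_pos.2 hτ0
  have hpi := Real.pi_pos
  have h2pi : 0 < 2 * Real.pi := by positivity
  set t := τ.im with ht
  set Q := Real.exp (-(2 * Real.pi * t)) with hQ
  have hQ0 : 0 < Q := Real.exp_pos _
  have hl : 0 < ‖p.1‖ := (mul_pos hQ0 ha).trans_le hp.1
  have hb : 0 < b := ha.trans hab
  set A := Real.log (Q * a / ‖p.1‖) / (2 * Real.pi) with hA
  set B := Real.log (b / ‖p.1‖) / (2 * Real.pi) with hBdef
  have eA : ‖p.1‖ * Real.exp (2 * Real.pi * A) = Q * a := by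
    rw [hA, mul_div_cancel₀ _ h2pi.ne', Real.exp_log (by positivity), mul_div_cancel₀ _ hl.ne']
  have eB : ‖p.1‖ * Real.exp (2 * Real.pi * B) = b := by
    rw [hBdef, mul_div_cancel₀ _ h2pi.ne', Real.exp_log (by positivity), mul_div_cancel₀ _ hl.ne']
  have eA' : ‖p.1‖ * Real.exp (2 * Real.pi * (A + t)) = a := by
    rw [mul_add, Real.exp_add, ← mul_assoc, eA, hQ, mul_right_comm, ← Real.exp_add]; simp
  have mono : ∀ x y : ℝ, x ≤ y → ‖p.1‖ * Real.exp (2 * Real.pi * x) ≤ ‖p.1‖ * Real.exp (2 * Real.pi * y) := by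
    intro x y h; gcongr
  have smono : ∀ x y : ℝ, x < y → ‖p.1‖ * Real.exp (2 * Real.pi * x) < ‖p.1‖ * Real.exp (2 * Real.pi * y) := by
    intro x y h; gcongr
  have hAB : A + 2 * t < B := by
    by_contra hcon
    have h1 := mono _ _ (not_lt.1 hcon)
    rw [eB] at h1
    have h2 : ‖p.1‖ * Real.exp (2 * Real.pi * (A + 2 * t)) * Q = a := by
      rw [hQ, mul_assoc, ← Real.exp_add, ← eA']; congr 2; ring
    nlinarith
  have hA0 : A ≤ 0 := by
    by_contra hcon
    have h1 := smono _ _ (not_le.1 hcon)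
    rw [eA] at h1; simp at h1
    linarith [hp.1]
  have hB0 : 0 ≤ B := by
    by_contra hcon
    have h1 := smono _ _ (not_le.1 hcon)
    rw [eB] at h1; simp at h1
    linarith [hp.2.1]
  have hmem : ∀ u : ℂ, A ≤ u.im → u.im ≤ B → s14T τ u p ∈ sectDom τ (Q * a) b δ := by
    intro u h1 h2
    rw [s14T_mem _ _ hτ0]
    refine ⟨?_, ?_, hw.le⟩
    · rw [← eA]; exact mono _ _ h1
    · rw [← eB]; exact mono _ _ h2
  have hmemS : ∀ u : ℂ, A + t ≤ u.im → u.im ≤ B → s14T τ u p ∈ sectDom τ a b δ := by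
    intro u h1 h2
    rw [s14T_mem _ _ hτ0]
    refine ⟨?_, ?_, hw.le⟩
    · have := mono _ _ h1
      rwa [eA'] at this
    · rw [← eB]; exact mono _ _ h2
  have hmemO : ∀ u : ℂ, A < u.im → u.im < B → s14T τ u p ∈ s14O τ (Q * a) b δ := by
    intro u h1 h2
    rw [s14T_memO _ _ hτ0]
    refine ⟨?_, ?_, hw⟩
    · rw [← eA]; exact smono _ _ h1
    · rw [← eB]; exact smono _ _ h2
  set g : ℂ → ℂ := fun u => D (s14T τ u p) with hg
  have hgd : ∀ u : ℂ, A < u.im → u.im < B → DifferentiableAt ℂ g u := by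
    intro u hu1 hu2
    have h3 := (hd.differentiableAt (mem_interior_iff_mem_nhds.1 (by
      rw [interior_interior]; exact s14O_int τ _ b δ (hmemO u hu1 hu2))))
    exact h3.comp u (s14T_diffu τ p u)
  have hgp : ∀ u : ℂ, A + t ≤ u.im → u.im ≤ B → g (u - τ) = g u := by
    intro u h1 h2
    have := hper _ (hmemS u h1 h2)
    rw [s14T_add, neg_add_eq_sub] at this
    exact this
  have hgn : ∀ k : ℕ, ∀ u : ℂ, A + k * t ≤ u.im → u.im ≤ B → g (u - k * τ) = g u := by
    intro k
    induction k with
    | zero => intro u _ _; simp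
    | succ k ih =>
      intro u h1 h2
      push_cast at h1
      have h3 := ih u (by nlinarith) h2
      rw [← h3, ← hgp (u - k * τ)]
      · congr 1; push_cast; ring
      · simp; rw [← ht]; linarith
      · simp; rw [← ht]
        have : 0 ≤ (k : ℝ) * t := by positivity
        linarith
  set n : ℂ → ℤ := fun u => ⌊(u.im - (A + t / 2)) / t⌋ with hndef
  have hn1 : ∀ u : ℂ, A + t / 2 ≤ u.im - n u * t ∧ u.im - n u * t < A + 3 * t / 2 := by
    intro u
    have h1 := Int.floor_le ((u.im - (A + t / 2)) / t)
    have h2 := Int.lt_floor_add_one ((u.im - (A + t / 2)) / t)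
    rw [le_div_iff₀ hτ] at h1
    rw [div_lt_iff₀ hτ] at h2
    simp only [hndef]
    constructor <;> linarith
  set G : ℂ → ℂ := fun u => g (u - n u * τ) with hG
  have hGk : ∀ (k : ℤ) (u : ℂ), A ≤ u.im - k * t → u.im - k * t ≤ B → G u = g (u - k * τ) := by
    intro k u h1 h2
    have h3 := hn1 u
    rcases le_total (n u) k with h | h
    · obtain ⟨j, hj⟩ := Int.eq_ofNat_of_zero_le (sub_nonneg.2 h)
      have hj' : (k : ℝ) - n u = j := by exact_mod_cast hj
      have hjc : (k : ℂ) - n u = j := by exact_mod_cast hj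
      have := hgn j (u - n u * τ) (by simp; rw [← ht, ← hj']; linarith) (by simp; rw [← ht]; linarith)
      rw [hG]
      simp only
      rw [← this]; congr 1; rw [← hjc]; ring
    · obtain ⟨j, hj⟩ := Int.eq_ofNat_of_zero_le (sub_nonneg.2 h)
      have hj' : (n u : ℝ) - k = j := by exact_mod_cast hj
      have hjc : (n u : ℂ) - k = j := by exact_mod_cast hj
      have := hgn j (u - k * τ) (by simp; rw [← ht, ← hj']; linarith) (by simp; rw [← ht]; linarith)
      rw [hG]
      simp only
      rw [← this]; congr 1; rw [← hjc]; ring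
  have hGd : Differentiable ℂ G := by
    intro u₀
    have h3 := hn1 u₀
    have hev : ∀ᶠ u : ℂ in 𝓝 u₀, A < u.im - n u₀ * t ∧ u.im - n u₀ * t < B := by
      have hcont : Continuous (fun u : ℂ => u.im - n u₀ * t) := by fun_prop
      refine (hcont.continuousAt.eventually (lt_mem_nhds ?_)).and
        (hcont.continuousAt.eventually (gt_mem_nhds ?_))
      · linarith
      · linarith
    have heq : G =ᶠ[𝓝 u₀] fun u => g (u - n u₀ * τ) := by
      filter_upwards [hev] with u hu
      exact hGk (n u₀) u hu.1.le hu.2.le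
    refine DifferentiableAt.congr_of_eventuallyEq ?_ heq
    have hd1 := hgd (u₀ - n u₀ * τ) (by simp; rw [← ht]; linarith) (by simp; rw [← ht]; linarith)
    exact DifferentiableAt.comp (g := g) (f := fun u : ℂ => u - n u₀ * τ) u₀ hd1 (by fun_prop)
  have hGb : Bornology.IsBounded (range G) := by
    refine (isBounded_iff_forall_norm_le.2 ⟨M, ?_⟩)
    rintro _ ⟨u, rfl⟩
    have h3 := hn1 u
    exact hM _ (hmem _ (by simp; rw [← ht]; linarith) (by simp; rw [← ht]; linarith))
  have hconst : ∀ x : ℝ, g x = g 0 := by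
    intro x
    have h1 := hGd.apply_eq_apply_of_bounded hGb x 0
    have h2 := hGk 0 x (by simpa using hA0) (by simpa using hB0)
    have h3 := hGk 0 0 (by simpa using hA0) (by simpa using hB0)
    simp at h2 h3
    rw [← h2, h1, h3]
  have hg0 : g 0 = D p := by simp only [hg, s14T_zero]
  have hdec : ∀ s : ℝ, 1 ≤ s → ‖D p‖ * Real.sqrt s ≤ M' := by
    intro s hs
    set x : ℝ := (p.2.im - s) * Complex.normSq τ / t with hx
    have h1 := hM' (s14T τ x p) (hmem _ (by simpa using hA0) (by simpa using hB0))
    have h2 : (s14T τ x p).2.im = s := by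
      have h5 := s14im_div τ x 0
      simp only [Complex.ofReal_zero, zero_mul, add_zero, zero_sub] at h5
      simp only [s14T, Complex.add_im]
      rw [h5, hx, ← ht]
      field_simp
      ring
    rw [h2] at h1
    have h3 := h1 hs
    have h4 : D (s14T τ x p) = D p := by rw [← hg0, ← hconst x]
    rwa [h4] at h3
  by_contra hne
  have hc : 0 < ‖D p‖ := norm_pos_iff.2 hne
  have h1 := hdec (1 + (M' / ‖D p‖) ^ 2) (by nlinarith [sq_nonneg (M' / ‖D p‖)])
  have h2 : M' / ‖D p‖ < Real.sqrt (1 + (M' / ‖D p‖) ^ 2) := by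
    apply Real.lt_sqrt_of_sq_lt; linarith
  rw [div_lt_iff₀ hc] at h2
  linarith

lemma s14_uniq (τ : ℂ) (hτ : 0 < τ.im) (a b δ : ℝ) (ha : 0 < a) (hab : a < b) (hδ : 0 < δ)
    (haqb : a < Real.exp (-(2 * Real.pi * τ.im)) * b) (D : ℂ × ℂ → ℂ)
    (hc : ContinuousOn D (sectDom τ (Real.exp (-(2 * Real.pi * τ.im)) * a) b δ))
    (hd : DifferentiableOn ℂ D (interior (sectDom τ (Real.exp (-(2 * Real.pi * τ.im)) * a) b δ)))
    (M : ℝ) (hM : ∀ p ∈ sectDom τ (Real.exp (-(2 * Real.pi * τ.im)) * a) b δ, ‖D p‖ ≤ M)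
    (hper : ∀ p ∈ sectDom τ a b δ, D (s14T τ (-τ) p) = D p)
    (M' : ℝ) (hM' : ∀ p ∈ sectDom τ (Real.exp (-(2 * Real.pi * τ.im)) * a) b δ, 1 ≤ p.2.im →
      ‖D p‖ * Real.sqrt p.2.im ≤ M')
    (p : ℂ × ℂ) (hp : p ∈ sectDom τ (Real.exp (-(2 * Real.pi * τ.im)) * a) b δ) : D p = 0 := by
  have hτ0 : τ ≠ 0 := by rintro rfl; simp at hτ
  refine s14_dense τ hτ0 δ hδ _ D hc (fun p hp => hp.2.2) ?_ ?_ p hp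
  · intro p hp ε hε
    exact ⟨hp.1, hp.2.1, (s14_w_up τ hτ0 p ε hε).trans hp.2.2⟩
  · intro p hp hlt
    exact s14_uniq_aux τ hτ a b δ ha hab haqb D hd M hM hper M' hM' p hp hlt

end S14

section S14

open Set Filter Topology MeasureTheory

lemma s14H_est (τ : ℂ) (hτ : 0 < τ.im) (a b δ N : ℝ) (m : ℕ) (hm : 3 ≤ m) (Δ : ℂ × ℂ → ℂ)
    (hN : ∀ p ∈ sectDom τ a b δ, ‖Δ p‖ * ‖p.2‖ ^ m ≤ N)
    (hY : ∀ p ∈ sectDom τ a b δ, 1 ≤ (τ * p.2).im)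
    (y : ℝ) (p : ℂ × ℂ) (hp : s14T τ (y * I) p ∈ sectDom τ a b δ) (G : ℝ) (hG0 : 0 ≤ G)
    (hG : ∀ x : ℝ, ‖s14K τ (x + y * I)‖ ≤ G * ‖(s14T τ (x + y * I) p).2‖ ^ (m - 2)) :
    ‖s14H τ Δ y p‖ ≤ N * G * (‖τ‖ * Real.pi) := by
  have hτ0 : τ ≠ 0 := by rintro rfl; simp at hτ
  have hn : 0 < ‖τ‖ := norm_pos_iff.2 hτ0
  have key : ∀ x : ℝ, ‖Δ (s14T τ (x + y * I) p) * s14K τ (x + y * I)‖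
      ≤ (N * G * ‖τ‖ ^ 2) * (1 + ((τ * p.2).re + x) ^ 2)⁻¹ := by
    intro x
    have hq : s14T τ (x + y * I) p ∈ sectDom τ a b δ := by
      rw [s14T_mem τ _ hτ0] at hp ⊢
      simpa using hp
    have h1 := hN _ hq
    have h2 := hY _ hq
    have h3 := hG x
    have h4 : (τ * (s14T τ (x + y * I) p).2).re = (τ * p.2).re + x := by
      rw [s14T_re τ hτ0]; simp
    set q := s14T τ (x + y * I) p
    have h5 : 1 + ((τ * p.2).re + x) ^ 2 ≤ ‖τ‖ ^ 2 * ‖q.2‖ ^ 2 := by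
      rw [← mul_pow, ← norm_mul, ← Complex.normSq_eq_norm_sq, Complex.normSq_apply, h4]
      nlinarith
    rw [← div_eq_mul_inv, le_div_iff₀ (by positivity), norm_mul]
    have h6 : ‖q.2‖ ^ m = ‖q.2‖ ^ (m - 2) * ‖q.2‖ ^ 2 := by
      rw [← pow_add]; congr 1; omega
    calc ‖Δ q‖ * ‖s14K τ (x + y * I)‖ * (1 + ((τ * p.2).re + x) ^ 2)
        ≤ ‖Δ q‖ * (G * ‖q.2‖ ^ (m - 2)) * (‖τ‖ ^ 2 * ‖q.2‖ ^ 2) := by gcongr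
      _ = (‖Δ q‖ * ‖q.2‖ ^ m) * (G * ‖τ‖ ^ 2) := by rw [h6]; ring
      _ ≤ N * (G * ‖τ‖ ^ 2) := by gcongr
      _ = _ := by ring
  have hi := (s14_int_shift (τ * p.2).re).const_mul (N * G * ‖τ‖ ^ 2)
  have h7 := norm_integral_le_of_norm_le hi (Eventually.of_forall key)
  rw [integral_const_mul, s14_int_shift_val] at h7
  unfold s14H
  rw [norm_mul, norm_inv]
  calc _ ≤ ‖τ‖⁻¹ * (N * G * ‖τ‖ ^ 2 * Real.pi) := by gcongr
    _ = _ := by field_simp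

lemma s14_est_all (τ : ℂ) (hτ : 0 < τ.im) (a b δ N κ : ℝ) (m : ℕ) (hm : 3 ≤ m) (Δ : ℂ × ℂ → ℂ)
    (hN0 : 0 ≤ N) (hκ0 : 0 < κ)
    (hN : ∀ p ∈ sectDom τ a b δ, ‖Δ p‖ * ‖p.2‖ ^ m ≤ N)
    (hY : ∀ p ∈ sectDom τ a b δ, 1 ≤ (τ * p.2).im)
    (hξ : ∀ p ∈ sectDom τ a b δ, 1 ≤ ‖p.2‖)
    (y : ℝ) (hκ : ∀ x : ℝ, ‖s14K τ (x + y * I)‖ ≤ κ ∧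
      ‖s14K τ (x + y * I)‖ * (-((x + y * I) / τ : ℂ).im) ≤ κ)
    (p : ℂ × ℂ) (hp : s14T τ (y * I) p ∈ sectDom τ a b δ) (hyp : -((τ * p.2).im / 2) ≤ y)
    (hYp : 1 ≤ (τ * p.2).im)
    (v : ℂ) (hq : s14T τ v p ∈ sectDom τ a b δ) (hv : 0 ≤ v.im) (hvt : (v / τ).im = 0)
    (c : ℂ) (hc : ‖c‖ ≤ ‖s14H τ Δ y p‖ + ‖Δ (s14T τ v p)‖) :
    ‖c‖ ≤ (2 * (κ * (‖τ‖ * Real.pi) + 1)) * N ∧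
    (1 ≤ p.2.im → ‖c‖ ≤ (2 * (κ * (‖τ‖ * Real.pi) + 1)) * N / Real.sqrt p.2.im) ∧
    (∀ θ : ℝ, 0 < θ → θ ≤ Real.pi / 2 → θ - Complex.arg τ ≤ Complex.arg p.2 →
      Complex.arg p.2 ≤ Real.pi - θ - Complex.arg τ →
      ‖c‖ ≤ ((κ * (‖τ‖ * Real.pi) + 1) * (2 / Real.sin θ) ^ (m - 2)) * N / ‖p.2‖ ^ (m - 2)) := by
  have hτ0 : τ ≠ 0 := by rintro rfl; simp at hτ
  have hn : 0 < ‖τ‖ := norm_pos_iff.2 hτ0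
  have hpi := Real.pi_pos
  have hline : ∀ x : ℝ, s14T τ (x + y * I) p ∈ sectDom τ a b δ := by
    intro x
    rw [s14T_mem τ _ hτ0] at hp ⊢
    simpa using hp
  -- combined estimate
  have main : ∀ g : ℝ, 0 ≤ g → (∀ x : ℝ, ‖s14K τ (x + y * I)‖ ≤
      (κ * g) * ‖(s14T τ (x + y * I) p).2‖ ^ (m - 2)) →
      1 ≤ g * ‖(s14T τ v p).2‖ ^ m → ‖c‖ ≤ (κ * (‖τ‖ * Real.pi) + 1) * (g * N) := by
    intro g hg h1 h2
    have e1 := s14H_est τ hτ a b δ N m hm Δ hN hY y p hp (κ * g) (by positivity) h1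
    have e2 : ‖Δ (s14T τ v p)‖ ≤ g * N := by
      have := hN _ hq
      calc ‖Δ (s14T τ v p)‖ = ‖Δ (s14T τ v p)‖ * 1 := by ring
        _ ≤ ‖Δ (s14T τ v p)‖ * (g * ‖(s14T τ v p).2‖ ^ m) := by gcongr
        _ = g * (‖Δ (s14T τ v p)‖ * ‖(s14T τ v p).2‖ ^ m) := by ring
        _ ≤ g * N := by gcongr
    calc ‖c‖ ≤ _ := hc
      _ ≤ N * (κ * g) * (‖τ‖ * Real.pi) + g * N := add_le_add e1 e2
      _ = _ := by ring
  have hA : 0 < κ * (‖τ‖ * Real.pi) + 1 := by positivity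
  refine ⟨?_, ?_, ?_⟩
  · have := main 1 zero_le_one (fun x => ?_) ?_
    · nlinarith [mul_nonneg hA.le hN0]
    · have h1 := one_le_pow₀ (hξ _ (hline x)) (n := m - 2)
      nlinarith [(hκ x).1]
    · rw [one_mul]; exact one_le_pow₀ (hξ _ hq)
  · intro hη
    have hη0 : 0 < p.2.im := by linarith
    have := main (2 / p.2.im) (by positivity) (fun x => ?_) ?_
    · have hs : Real.sqrt p.2.im ≤ p.2.im := by
        rw [Real.sqrt_le_left hη0.le]; nlinarith
      have hs0 : 0 < Real.sqrt p.2.im := Real.sqrt_pos.2 hη0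
      calc ‖c‖ ≤ _ := this
        _ = (2 * (κ * (‖τ‖ * Real.pi) + 1)) * N / p.2.im := by ring
        _ ≤ _ := by gcongr
    · have hr := hξ _ (hline x)
      have h1 : ‖(s14T τ (x + y * I) p).2‖ ≤ ‖(s14T τ (x + y * I) p).2‖ ^ (m - 2) :=
        le_self_pow₀ hr (by omega)
      have h2 : p.2.im + ((x + y * I) / τ : ℂ).im ≤ ‖(s14T τ (x + y * I) p).2‖ := by
        have := Complex.im_le_norm (s14T τ (x + y * I) p).2
        simpa [s14T] using this
      obtain ⟨k1, k2⟩ := hκ x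
      set r := ‖(s14T τ (x + y * I) p).2‖
      set k := ‖s14K τ (x + y * I)‖
      have hk0 : 0 ≤ k := norm_nonneg _
      set s := ((x + y * I) / τ : ℂ).im
      have h3 : k * p.2.im ≤ 2 * κ * r := by
        by_cases hs : -(p.2.im / 2) ≤ s
        · nlinarith
        · push Not at hs
          nlinarith
      have h4 : k ≤ κ * (2 / p.2.im) * r := by
        have : κ * (2 / p.2.im) * r = 2 * κ * r / p.2.im := by ring
        rw [this, le_div_iff₀ hη0]; exact h3
      refine h4.trans ?_
      gcongr
    · have h2 : p.2.im ≤ ‖(s14T τ v p).2‖ := by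
        have := Complex.im_le_norm (s14T τ v p).2
        simpa [s14T, hvt] using this
      have h1 : ‖(s14T τ v p).2‖ ≤ ‖(s14T τ v p).2‖ ^ m := le_self_pow₀ (hξ _ hq) (by omega)
      rw [div_mul_eq_mul_div, le_div_iff₀ hη0]
      linarith
  · intro θ hθ hθ2 h1 h2
    have hsin : 0 < Real.sin θ := Real.sin_pos_of_pos_of_lt_pi hθ (by linarith)
    have hξ0 : 0 < ‖p.2‖ := by
      rw [norm_pos_iff]; intro h0
      rw [h0] at hYp; norm_num at hYp
    have hs1 : Real.sin θ ≤ Real.sin (Complex.arg τ + Complex.arg p.2) := by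
      by_cases hle : Complex.arg τ + Complex.arg p.2 ≤ Real.pi / 2
      · exact Real.sin_le_sin_of_le_of_le_pi_div_two (by linarith) hle (by linarith)
      · rw [← Real.sin_pi_sub (Complex.arg τ + Complex.arg p.2)]
        exact Real.sin_le_sin_of_le_of_le_pi_div_two (by linarith) (by linarith) (by linarith)
    have hYs : (τ * p.2).im = ‖τ‖ * ‖p.2‖ * Real.sin (Complex.arg τ + Complex.arg p.2) := by
      rw [Real.sin_add, Complex.mul_im, ← Complex.norm_mul_cos_arg τ, ← Complex.norm_mul_sin_arg τ,
        ← Complex.norm_mul_cos_arg p.2, ← Complex.norm_mul_sin_arg p.2]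
      simp only [Complex.norm_mul_cos_arg, Complex.norm_mul_sin_arg]
      have a1 := Complex.norm_mul_cos_arg τ
      have a2 := Complex.norm_mul_sin_arg τ
      have a3 := Complex.norm_mul_cos_arg p.2
      have a4 := Complex.norm_mul_sin_arg p.2
      rw [← a1, ← a2, ← a3, ← a4]
      ring
    have hlow : ∀ u : ℂ, -((τ * p.2).im / 2) ≤ u.im →
        Real.sin θ * ‖p.2‖ / 2 ≤ ‖(s14T τ u p).2‖ := by
      intro u hu
      have e1 := Complex.im_le_norm (τ * (s14T τ u p).2)
      rw [norm_mul, s14T_re τ hτ0, Complex.add_im] at e1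
      have e2 : ‖τ‖ * (Real.sin θ * ‖p.2‖) ≤ (τ * p.2).im := by
        rw [hYs]
        calc ‖τ‖ * (Real.sin θ * ‖p.2‖) = ‖τ‖ * ‖p.2‖ * Real.sin θ := by ring
          _ ≤ _ := by gcongr
      have e3 : ‖τ‖ * (Real.sin θ * ‖p.2‖ / 2) ≤ ‖τ‖ * ‖(s14T τ u p).2‖ := by linarith
      exact le_of_mul_le_mul_left e3 hn
    have hone : ∀ u : ℂ, -((τ * p.2).im / 2) ≤ u.im →
        1 ≤ (2 / (Real.sin θ * ‖p.2‖)) ^ (m - 2) * ‖(s14T τ u p).2‖ ^ (m - 2) := by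
      intro u hu
      rw [← mul_pow]
      apply one_le_pow₀
      rw [div_mul_eq_mul_div, le_div_iff₀ (by positivity)]
      linarith [hlow u hu]
    have := main ((2 / (Real.sin θ * ‖p.2‖)) ^ (m - 2)) (by positivity) (fun x => ?_) ?_
    · refine this.trans_eq ?_
      rw [← div_div, div_pow]; ring
    · have := hone (x + y * I) (by simpa using hyp)
      rw [mul_assoc]
      have k1 := (hκ x).1
      nlinarith
    · refine (hone v (by linarith)).trans ?_
      gcongr
      · exact hξ _ hq
      · omega

end S14

section S14

open Set Filter Topology MeasureTheory

/-- The glued solution. -/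
noncomputable def s14h (τ : ℂ) (Δ : ℂ × ℂ → ℂ) (ε ρ : ℝ) (p : ℂ × ℂ) : ℂ :=
  if ρ ≤ ‖p.1‖ then s14H τ Δ (-ε) p - Δ (s14T τ 0 p)
  else s14H τ Δ (τ.im + ε) p + Δ (s14T τ τ p)

lemma s14_lev_mono (l y y' : ℝ) (hl : 0 ≤ l) (h : y ≤ y') :
    l * Real.exp (2 * Real.pi * y) ≤ l * Real.exp (2 * Real.pi * y') := by
  have := Real.pi_pos
  gcongr

lemma s14_lev_neg (a l y : ℝ) (h : a * Real.exp (2 * Real.pi * y) ≤ l) :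
    a ≤ l * Real.exp (2 * Real.pi * (-y)) := by
  have h1 : Real.exp (2 * Real.pi * y) * Real.exp (2 * Real.pi * (-y)) = 1 := by
    rw [← Real.exp_add]; simp
  have h2 := Real.exp_pos (2 * Real.pi * (-y))
  have h3 := mul_le_mul_of_nonneg_right h h2.le
  rwa [mul_assoc, h1, mul_one] at h3

lemma s14_lev_neg_lt (a l y : ℝ) (h : a * Real.exp (2 * Real.pi * y) < l) :
    a < l * Real.exp (2 * Real.pi * (-y)) := by
  have h1 : Real.exp (2 * Real.pi * y) * Real.exp (2 * Real.pi * (-y)) = 1 := by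
    rw [← Real.exp_add]; simp
  have h2 := Real.exp_pos (2 * Real.pi * (-y))
  have h3 := mul_lt_mul_of_pos_right h h2
  rwa [mul_assoc, h1, mul_one] at h3

lemma s14_lev_add (l y y' : ℝ) : l * Real.exp (2 * Real.pi * y) * Real.exp (2 * Real.pi * y')
    = l * Real.exp (2 * Real.pi * (y + y')) := by
  rw [mul_assoc, ← Real.exp_add, mul_add]

lemma s14_jumpT (τ : ℂ) (hτ : 0 < τ.im) (a b δ B : ℝ) (ha : 0 < a) (hδ : 0 < δ) (hB0 : 0 ≤ B)
    (Δ : ℂ × ℂ → ℂ) (hc : ContinuousOn Δ (sectDom τ a b δ))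
    (hd : DifferentiableOn ℂ Δ (interior (sectDom τ a b δ)))
    (hB : ∀ p ∈ sectDom τ a b δ, ‖Δ p‖ ≤ B * (1 + (τ * p.2).re ^ 2)⁻¹)
    (u : ℂ) (y₁ y₂ : ℝ) (h1 : -τ.im < y₁) (h1' : y₁ < 0) (h2 : 0 < y₂) (h2' : y₂ < τ.im)
    (p : ℂ × ℂ)
    (hp1 : a ≤ ‖p.1‖ * Real.exp (2 * Real.pi * (u.im + y₁)))
    (hp2 : ‖p.1‖ * Real.exp (2 * Real.pi * (u.im + y₂)) ≤ b)
    (hw : ‖p.1 * Complex.exp (2 * (Real.pi : ℂ) * Complex.I * τ * p.2)‖ ≤ δ) :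
    s14H τ Δ y₁ (s14T τ u p) - s14H τ Δ y₂ (s14T τ u p) = Δ (s14T τ u p) := by
  have hτ0 : τ ≠ 0 := by rintro rfl; simp at hτ
  apply s14_jump τ hτ a b δ B ha hδ hB0 Δ hc hd hB y₁ y₂ h1 h1' h2 h2'
  · rw [s14T_fst, s14_lev_add]; exact hp1
  · rw [s14T_fst, s14_lev_add]; exact hp2
  · rw [s14T_w τ u hτ0]; exact hw

lemma s14_sol (τ : ℂ) (hτ : 0 < τ.im) (a b δ B : ℝ) (ha : 0 < a) (hδ : 0 < δ) (hB0 : 0 ≤ B)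
    (Δ : ℂ × ℂ → ℂ) (hc : ContinuousOn Δ (sectDom τ a b δ))
    (hd : DifferentiableOn ℂ Δ (interior (sectDom τ a b δ)))
    (hB : ∀ p ∈ sectDom τ a b δ, ‖Δ p‖ ≤ B * (1 + (τ * p.2).re ^ 2)⁻¹)
    (ε ρ : ℝ) (hε : 0 < ε) (hε' : ε < τ.im)
    (hρ1 : a * Real.exp (2 * Real.pi * ε) < ρ)
    (hρ2 : ρ * Real.exp (2 * Real.pi * (τ.im + ε)) < b) :
    ContinuousOn (s14h τ Δ ε ρ) (sectDom τ (Real.exp (-(2 * Real.pi * τ.im)) * a) b δ) ∧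
    DifferentiableOn ℂ (s14h τ Δ ε ρ)
      (interior (sectDom τ (Real.exp (-(2 * Real.pi * τ.im)) * a) b δ)) ∧
    (∀ p ∈ sectDom τ a b δ, s14h τ Δ ε ρ (s14T τ (-τ) p) - s14h τ Δ ε ρ p = Δ p) := by
  have hτ0 : τ ≠ 0 := by rintro rfl; simp at hτ
  set Q := Real.exp (-(2 * Real.pi * τ.im)) with hQdef
  have hQ : Q = Real.exp (2 * Real.pi * (-τ.im)) := by rw [hQdef]; congr 1; ring
  have hQ0 : 0 < Q := Real.exp_pos _
  have hy1 : ∀ n : ℤ, -ε ≠ n * τ.im :=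
    s14_window τ.im (-ε) (-1) (by push_cast; linarith) (by push_cast; linarith)
  have hy2 : ∀ n : ℤ, τ.im + ε ≠ n * τ.im :=
    s14_window τ.im (τ.im + ε) 1 (by push_cast; linarith) (by push_cast; linarith)
  have jump := s14_jumpT τ hτ a b δ B ha hδ hB0 Δ hc hd hB
  have hQa : ∀ l, Q * a ≤ l → a ≤ l * Real.exp (2 * Real.pi * τ.im) := by
    intro l hl
    have := s14_lev_neg a l (-τ.im) (by rw [← hQ, mul_comm]; exact hl)
    simpa using this
  have hQa' : ∀ l, Q * a < l → a < l * Real.exp (2 * Real.pi * τ.im) := by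
    intro l hl
    have := s14_lev_neg_lt a l (-τ.im) (by rw [← hQ, mul_comm]; exact hl)
    simpa using this
  -- lower representation
  have hL : ∀ p : ℂ × ℂ, ‖p.1‖ < ρ →
      s14h τ Δ ε ρ p = s14H τ Δ (τ.im + ε) p + Δ (s14T τ τ p) := by
    intro p hp; rw [s14h, if_neg (not_le.2 hp)]
  have hLb : ∀ l, l < ρ → l * Real.exp (2 * Real.pi * (τ.im + ε)) < b := by
    intro l hl
    have : 0 < Real.exp (2 * Real.pi * (τ.im + ε)) := Real.exp_pos _
    nlinarith
  -- upper representation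
  have hU : ∀ p ∈ sectDom τ (Q * a) b δ, a * Real.exp (2 * Real.pi * ε) ≤ ‖p.1‖ →
      s14h τ Δ ε ρ p = s14H τ Δ (-ε) p - Δ (s14T τ 0 p) := by
    intro p hp hlo
    by_cases hle : ρ ≤ ‖p.1‖
    · rw [s14h, if_pos hle]
    · push Not at hle
      rw [hL p hle]
      have l1 := s14_lev_neg _ _ _ hlo
      have l2 := (hLb _ hle).le
      have n0 := norm_nonneg p.1
      have j1 := jump 0 (-ε) (τ.im / 2) (by linarith) (by linarith) (by linarith) (by linarith) p
        (by simpa using l1) (by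
          refine le_trans ?_ l2
          apply s14_lev_mono _ _ _ n0; simp; linarith) hp.2.2
      have j2 := jump τ (-(τ.im / 2)) ε (by linarith) (by linarith) (by linarith) (by linarith) p
        (by
          refine l1.trans ?_
          apply s14_lev_mono _ _ _ n0; linarith) l2 hp.2.2
      rw [s14H_shift' τ hτ0, s14H_shift' τ hτ0] at j2
      rw [s14T_zero] at j1 ⊢
      have e1 : -(τ.im / 2) + τ.im = τ.im / 2 := by ring
      rw [e1, add_comm ε] at j2
      rw [← j1, ← j2]; ring
  refine ⟨?_, ?_, ?_⟩
  · intro p hp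
    by_cases hle : ρ ≤ ‖p.1‖
    · have hlo : a * Real.exp (2 * Real.pi * ε) < ‖p.1‖ := hρ1.trans_le hle
      have hev : ∀ᶠ q in 𝓝 p, a * Real.exp (2 * Real.pi * ε) < ‖q.1‖ :=
        (isOpen_lt (f := fun _ : ℂ × ℂ => a * Real.exp (2 * Real.pi * ε)) (g := fun q => ‖q.1‖)
          (by fun_prop) (by fun_prop)).mem_nhds hlo
      set A := sectDom τ (Q * a) b δ ∩ {q | a * Real.exp (2 * Real.pi * ε) < ‖q.1‖} with hA
      have hpA : p ∈ A := ⟨hp, hlo⟩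
      have hmem : ∀ q ∈ A, q ∈ {q | s14T τ ((-ε : ℝ) * I) q ∈ sectDom τ a b δ} ∧
          s14T τ 0 q ∈ sectDom τ a b δ := by
        intro q hq
        have n0 := norm_nonneg q.1
        have l1 := s14_lev_neg _ _ _ (le_of_lt hq.2)
        have l2 := s14_lev_mono ‖q.1‖ (-ε) 0 n0 (by linarith)
        simp only [mul_zero, Real.exp_zero, mul_one] at l2
        refine ⟨?_, ?_⟩
        · rw [mem_ofPred_eq, s14T_mem τ _ hτ0]
          refine ⟨by simpa using l1, ?_, hq.1.2.2⟩
          refine le_trans ?_ hq.1.2.1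
          simpa using l2
        · rw [s14T_zero]
          exact ⟨by linarith, hq.1.2.1, hq.1.2.2⟩
      have c1 : ContinuousWithinAt (fun q => s14H τ Δ (-ε) q - Δ (s14T τ 0 q)) A p := by
        have a1 := ((s14H_cont τ hτ a b δ B hB0 Δ hc hB (-ε) hy1) p (hmem p hpA).1).mono
          (fun q hq => (hmem q hq).1)
        have a2 : ContinuousWithinAt (fun q => Δ (s14T τ 0 q)) A p :=
          ContinuousWithinAt.comp (t := sectDom τ a b δ) (hc _ (hmem p hpA).2)
            (s14T_contp τ 0).continuousWithinAt (fun q hq => (hmem q hq).2)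
        exact a1.sub a2
      have c2 : ContinuousWithinAt (s14h τ Δ ε ρ) A p :=
        c1.congr (fun q hq => hU q hq.1 (le_of_lt hq.2)) (hU p hp hlo.le)
      exact (continuousWithinAt_inter hev).1 c2
    · push Not at hle
      have hev : ∀ᶠ q in 𝓝 p, ‖q.1‖ < ρ :=
        (isOpen_lt (f := fun q : ℂ × ℂ => ‖q.1‖) (g := fun q => ρ)
          (by fun_prop) (by fun_prop)).mem_nhds hle
      set A := sectDom τ (Q * a) b δ ∩ {q | ‖q.1‖ < ρ} with hA
      have hpA : p ∈ A := ⟨hp, hle⟩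
      have hmem : ∀ q ∈ A, q ∈ {q | s14T τ ((τ.im + ε : ℝ) * I) q ∈ sectDom τ a b δ} ∧
          s14T τ τ q ∈ sectDom τ a b δ := by
        intro q hq
        have n0 := norm_nonneg q.1
        have l1 := hQa _ hq.1.1
        have l2 := hLb _ hq.2
        have l3 := s14_lev_mono ‖q.1‖ τ.im (τ.im + ε) n0 (by linarith)
        refine ⟨?_, ?_⟩
        · rw [mem_ofPred_eq, s14T_mem τ _ hτ0]
          have : (((τ.im + ε : ℝ) : ℂ) * I).im = τ.im + ε := by simp
          rw [this]
          exact ⟨by linarith, l2.le, hq.1.2.2⟩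
        · rw [s14T_mem τ _ hτ0]
          exact ⟨l1, by linarith, hq.1.2.2⟩
      have c1 : ContinuousWithinAt (fun q => s14H τ Δ (τ.im + ε) q + Δ (s14T τ τ q)) A p := by
        have a1 := ((s14H_cont τ hτ a b δ B hB0 Δ hc hB (τ.im + ε) hy2) p (hmem p hpA).1).mono
          (fun q hq => (hmem q hq).1)
        have a2 : ContinuousWithinAt (fun q => Δ (s14T τ τ q)) A p :=
          ContinuousWithinAt.comp (t := sectDom τ a b δ) (hc _ (hmem p hpA).2)
            (s14T_contp τ τ).continuousWithinAt (fun q hq => (hmem q hq).2)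
        exact a1.add a2
      have c2 : ContinuousWithinAt (s14h τ Δ ε ρ) A p :=
        c1.congr (fun q hq => hL q hq.2) (hL p hle)
      exact (continuousWithinAt_inter hev).1 c2
  · intro p hp
    have hO := s14_int_O τ hτ0 _ b δ (mul_pos hQ0 ha) hp
    have hnh : sectDom τ (Q * a) b δ ∈ 𝓝 p := mem_interior_iff_mem_nhds.1 hp
    have n0 := norm_nonneg p.1
    have hdO : ∀ q ∈ s14O τ a b δ, DifferentiableAt ℂ Δ q := fun q hq =>
      hd.differentiableAt (mem_interior_iff_mem_nhds.1 (by
        rw [interior_interior]; exact s14O_int τ a b δ hq))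
    apply DifferentiableAt.differentiableWithinAt
    by_cases hle : ρ ≤ ‖p.1‖
    · have hlo : a * Real.exp (2 * Real.pi * ε) < ‖p.1‖ := hρ1.trans_le hle
      have hev : ∀ᶠ q in 𝓝 p, a * Real.exp (2 * Real.pi * ε) < ‖q.1‖ :=
        (isOpen_lt (f := fun _ : ℂ × ℂ => a * Real.exp (2 * Real.pi * ε)) (g := fun q => ‖q.1‖)
          (by fun_prop) (by fun_prop)).mem_nhds hlo
      have l1 := s14_lev_neg_lt _ _ _ hlo
      have l2 := s14_lev_mono ‖p.1‖ (-ε) 0 n0 (by linarith)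
      simp only [mul_zero, Real.exp_zero, mul_one] at l2
      have d1 := s14H_diff τ hτ a b δ B hB0 Δ hc hd hB (-ε) hy1 p (by
        rw [s14T_memO τ _ hτ0]
        have : (((-ε : ℝ) : ℂ) * I).im = -ε := by simp
        rw [this]
        exact ⟨l1, l2.trans_lt hO.2.1, hO.2.2⟩)
      have d2 : DifferentiableAt ℂ (fun q => Δ (s14T τ 0 q)) p :=
        DifferentiableAt.comp (g := Δ) (f := s14T τ 0) p (hdO _ (by
          rw [s14T_zero]; exact ⟨by linarith, hO.2.1, hO.2.2⟩)) (s14T_diffp τ 0 p)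
      refine (d1.sub d2).congr_of_eventuallyEq ?_
      filter_upwards [hev, hnh] with q h1 h2 using hU q h2 h1.le
    · push Not at hle
      have hev : ∀ᶠ q in 𝓝 p, ‖q.1‖ < ρ :=
        (isOpen_lt (f := fun q : ℂ × ℂ => ‖q.1‖) (g := fun q => ρ)
          (by fun_prop) (by fun_prop)).mem_nhds hle
      have l1 := hQa' _ hO.1
      have l2 := hLb _ hle
      have l3 := s14_lev_mono ‖p.1‖ τ.im (τ.im + ε) n0 (by linarith)
      have d1 := s14H_diff τ hτ a b δ B hB0 Δ hc hd hB (τ.im + ε) hy2 p (by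
        rw [s14T_memO τ _ hτ0]
        have : (((τ.im + ε : ℝ) : ℂ) * I).im = τ.im + ε := by simp
        rw [this]
        exact ⟨by linarith, l2, hO.2.2⟩)
      have d2 : DifferentiableAt ℂ (fun q => Δ (s14T τ τ q)) p :=
        DifferentiableAt.comp (g := Δ) (f := s14T τ τ) p (hdO _ (by
          rw [s14T_memO τ _ hτ0]; exact ⟨l1, by linarith, hO.2.2⟩)) (s14T_diffp τ τ p)
      refine (d1.add d2).congr_of_eventuallyEq ?_
      filter_upwards [hev] with q h1 using hL q h1
  · intro p hp
    have n0 := norm_nonneg p.1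
    have hq1 : ‖(s14T τ (-τ) p).1‖ = ‖p.1‖ * Real.exp (2 * Real.pi * (-τ.im)) := by
      rw [s14T_fst]; simp
    have hqle : ‖(s14T τ (-τ) p).1‖ ≤ ‖p.1‖ := by
      rw [hq1]
      have := s14_lev_mono ‖p.1‖ (-τ.im) 0 n0 (by linarith)
      simpa using this
    have back : s14T τ τ (s14T τ (-τ) p) = p := by
      rw [s14T_add, add_neg_cancel, s14T_zero]
    by_cases h1 : ‖p.1‖ < ρ
    · rw [hL p h1, hL _ (hqle.trans_lt h1), back, s14H_shift τ hτ0]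
      have l2 := hLb _ h1
      have l3 := s14_lev_mono ‖p.1‖ 0 ε n0 hε.le
      simp only [mul_zero, Real.exp_zero, mul_one] at l3
      have j := jump τ (ε - τ.im) ε (by linarith) (by linarith) hε hε' p
        (by
          have e : τ.im + (ε - τ.im) = ε := by ring
          rw [e]; linarith [hp.1]) l2.le hp.2.2
      rw [s14H_shift' τ hτ0, s14H_shift' τ hτ0] at j
      have e1 : ε - τ.im + τ.im = ε := by ring
      have e2 : τ.im + ε - τ.im = ε := by ring
      rw [e1, add_comm ε] at j
      rw [e2, ← j]; ring
    · have h1' := not_lt.1 h1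
      have eU : s14h τ Δ ε ρ p = s14H τ Δ (-ε) p - Δ p := by
        rw [s14h, if_pos h1', s14T_zero]
      have lo : a * Real.exp (2 * Real.pi * ε) < ‖p.1‖ := hρ1.trans_le h1'
      by_cases h2 : ‖(s14T τ (-τ) p).1‖ < ρ
      · rw [hL _ h2, back, s14H_shift τ hτ0, eU]
        have l2 := hLb _ h2
        rw [hq1, s14_lev_add] at l2
        have e0 : -τ.im + (τ.im + ε) = ε := by ring
        rw [e0] at l2
        have j := jump 0 (-ε) ε (by linarith) (by linarith) hε hε' p
          (by simpa using s14_lev_neg _ _ _ lo.le) (by simpa using l2.le) hp.2.2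
        rw [s14T_zero] at j
        have e2 : τ.im + ε - τ.im = ε := by ring
        rw [e2]
        linear_combination (-1 : ℂ) * j
      · have h2' := not_lt.1 h2
        have eU' : s14h τ Δ ε ρ (s14T τ (-τ) p)
            = s14H τ Δ (-ε) (s14T τ (-τ) p) - Δ (s14T τ (-τ) p) := by
          rw [s14h, if_pos h2', s14T_zero]
        have lo' : a * Real.exp (2 * Real.pi * ε) < ‖(s14T τ (-τ) p).1‖ := hρ1.trans_le h2'
        have l1 := s14_lev_neg _ _ _ lo'.le
        rw [hq1, s14_lev_add] at l1
        have l2 := s14_lev_mono ‖p.1‖ (-ε) 0 n0 (by linarith)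
        simp only [mul_zero, Real.exp_zero, mul_one] at l2
        have j := jump (-τ) (-ε) (τ.im - ε) (by linarith) (by linarith) (by linarith)
          (by linarith) p (by simpa using l1) (by
            have e0 : (-τ).im + (τ.im - ε) = -ε := by rw [Complex.neg_im]; ring
            rw [e0]; exact l2.trans hp.2.1) hp.2.2
        have e3 : s14H τ Δ (τ.im - ε) (s14T τ (-τ) p) = s14H τ Δ (-ε) p := by
          rw [s14H_shift τ hτ0]; congr 1; ring
        rw [eU', eU, ← e3, ← j]; ring

end S14

section S14

open Set Filter Topology MeasureTheory

lemma s14_params (τ : ℂ) (hτ : 0 < τ.im) (a b : ℝ) (ha : 0 < a)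
    (haqb : a < Real.exp (-(2 * Real.pi * τ.im)) * b) :
    ∃ ε ρ : ℝ, 0 < ε ∧ ε ≤ τ.im / 2 ∧ a * Real.exp (2 * Real.pi * ε) < ρ ∧
      ρ * Real.exp (2 * Real.pi * (τ.im + ε)) < b := by
  have hpi := Real.pi_pos
  have hlt : a * Real.exp (2 * Real.pi * τ.im) < b := by
    have h1 := mul_lt_mul_of_pos_right haqb (Real.exp_pos (2 * Real.pi * τ.im))
    have h2 : Real.exp (-(2 * Real.pi * τ.im)) * Real.exp (2 * Real.pi * τ.im) = 1 := by
      rw [← Real.exp_add]; simp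
    calc _ < _ := h1
      _ = (Real.exp (-(2 * Real.pi * τ.im)) * Real.exp (2 * Real.pi * τ.im)) * b := by ring
      _ = b := by rw [h2, one_mul]
  have hA : 0 < a * Real.exp (2 * Real.pi * τ.im) := by positivity
  set r := b / (a * Real.exp (2 * Real.pi * τ.im)) with hr
  have hr1 : 1 < r := by rw [hr, one_lt_div hA]; exact hlt
  have hL : 0 < Real.log r := Real.log_pos hr1
  set ε := min (τ.im / 2) (Real.log r / (8 * Real.pi)) with hεd
  have hε : 0 < ε := lt_min (by positivity) (by positivity)
  have hε2 : ε ≤ Real.log r / (8 * Real.pi) := min_le_right _ _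
  refine ⟨ε, a * Real.exp (2 * Real.pi * (2 * ε)), hε, min_le_left _ _, ?_, ?_⟩
  · gcongr
    linarith
  · rw [s14_lev_add]
    have e1 : Real.exp (2 * Real.pi * (2 * ε + (τ.im + ε)))
        = Real.exp (2 * Real.pi * τ.im) * Real.exp (6 * Real.pi * ε) := by
      rw [← Real.exp_add]; congr 1; ring
    rw [e1, ← mul_assoc]
    have e2 : Real.exp (6 * Real.pi * ε) < r := by
      rw [← Real.lt_log_iff_exp_lt (by linarith)]
      rw [le_div_iff₀ (by positivity)] at hε2
      nlinarith
    rw [hr, lt_div_iff₀ hA] at e2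
    linarith

lemma s14_kappa (τ : ℂ) (hτ : 0 < τ.im) (ε : ℝ) (hε : 0 < ε) (hε' : ε < τ.im) :
    ∃ κ : ℝ, 0 < κ ∧ (∀ x : ℝ, ‖s14K τ (x + (-ε : ℝ) * I)‖ ≤ κ ∧
      ‖s14K τ (x + (-ε : ℝ) * I)‖ * (-((x + (-ε : ℝ) * I) / τ : ℂ).im) ≤ κ) ∧
    (∀ x : ℝ, ‖s14K τ (x + (τ.im + ε : ℝ) * I)‖ ≤ κ ∧
      ‖s14K τ (x + (τ.im + ε : ℝ) * I)‖ * (-((x + (τ.im + ε : ℝ) * I) / τ : ℂ).im) ≤ κ) := by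
  have hy1 : ∀ n : ℤ, -ε ≠ n * τ.im :=
    s14_window τ.im (-ε) (-1) (by push_cast; linarith) (by push_cast; linarith)
  have hy2 : ∀ n : ℤ, τ.im + ε ≠ n * τ.im :=
    s14_window τ.im (τ.im + ε) 1 (by push_cast; linarith) (by push_cast; linarith)
  obtain ⟨κ₁, h1, k1⟩ := s14K_bound τ hτ (-ε) hy1
  obtain ⟨κ₂, h2, k2⟩ := s14K_bound τ hτ (τ.im + ε) hy2
  exact ⟨max κ₁ κ₂, lt_max_of_lt_left h1,
    fun x => ⟨(k1 x).1.trans (le_max_left _ _), (k1 x).2.trans (le_max_left _ _)⟩,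
    fun x => ⟨(k2 x).1.trans (le_max_right _ _), (k2 x).2.trans (le_max_right _ _)⟩⟩

lemma s14_deep (τ : ℂ) (α δ R : ℝ) (hα : 0 < α)
    (hδ : δ ≤ α * Real.exp (-(2 * Real.pi * R))) (p : ℂ × ℂ) (hp : α ≤ ‖p.1‖)
    (hw : ‖p.1 * Complex.exp (2 * (Real.pi : ℂ) * Complex.I * τ * p.2)‖ ≤ δ) :
    R ≤ (τ * p.2).im := by
  have hpi := Real.pi_pos
  have h1 : ‖p.1 * Complex.exp (2 * (Real.pi : ℂ) * Complex.I * τ * p.2)‖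
      = ‖p.1‖ * Real.exp (-(2 * Real.pi * (τ * p.2).im)) := by
    rw [norm_mul, Complex.norm_exp]
    congr 2
    simp; ring
  rw [h1] at hw
  by_contra hcon
  push Not at hcon
  have h2 : Real.exp (-(2 * Real.pi * R)) < Real.exp (-(2 * Real.pi * (τ * p.2).im)) := by
    apply Real.exp_lt_exp.2
    nlinarith
  have h3 := Real.exp_pos (-(2 * Real.pi * R))
  nlinarith

lemma s14_est_h (τ : ℂ) (hτ : 0 < τ.im) (a b δ N κ : ℝ) (m : ℕ) (hm : 3 ≤ m) (Δ : ℂ × ℂ → ℂ)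
    (ha : 0 < a) (hN0 : 0 ≤ N) (hκ0 : 0 < κ)
    (hN : ∀ p ∈ sectDom τ a b δ, ‖Δ p‖ * ‖p.2‖ ^ m ≤ N)
    (hY : ∀ p ∈ sectDom τ a b δ, 1 ≤ (τ * p.2).im)
    (hξ : ∀ p ∈ sectDom τ a b δ, 1 ≤ ‖p.2‖)
    (ε ρ : ℝ) (hε : 0 < ε)
    (hρ1 : a * Real.exp (2 * Real.pi * ε) < ρ)
    (hρ2 : ρ * Real.exp (2 * Real.pi * (τ.im + ε)) < b)
    (hκ1 : ∀ x : ℝ, ‖s14K τ (x + (-ε : ℝ) * I)‖ ≤ κ ∧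
      ‖s14K τ (x + (-ε : ℝ) * I)‖ * (-((x + (-ε : ℝ) * I) / τ : ℂ).im) ≤ κ)
    (hκ2 : ∀ x : ℝ, ‖s14K τ (x + (τ.im + ε : ℝ) * I)‖ ≤ κ ∧
      ‖s14K τ (x + (τ.im + ε : ℝ) * I)‖ * (-((x + (τ.im + ε : ℝ) * I) / τ : ℂ).im) ≤ κ)
    (p : ℂ × ℂ) (hp : p ∈ sectDom τ (Real.exp (-(2 * Real.pi * τ.im)) * a) b δ)
    (hyp : ε ≤ (τ * p.2).im / 2) (hYp : 1 ≤ (τ * p.2).im) :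
    ‖s14h τ Δ ε ρ p‖ ≤ (2 * (κ * (‖τ‖ * Real.pi) + 1)) * N ∧
    (1 ≤ p.2.im → ‖s14h τ Δ ε ρ p‖ ≤
      (2 * (κ * (‖τ‖ * Real.pi) + 1)) * N / Real.sqrt p.2.im) ∧
    (∀ θ : ℝ, 0 < θ → θ ≤ Real.pi / 2 → θ - Complex.arg τ ≤ Complex.arg p.2 →
      Complex.arg p.2 ≤ Real.pi - θ - Complex.arg τ →
      ‖s14h τ Δ ε ρ p‖ ≤
        ((κ * (‖τ‖ * Real.pi) + 1) * (2 / Real.sin θ) ^ (m - 2)) * N / ‖p.2‖ ^ (m - 2)) := by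
  have hτ0 : τ ≠ 0 := by rintro rfl; simp at hτ
  have n0 := norm_nonneg p.1
  by_cases hle : ρ ≤ ‖p.1‖
  · have hlo : a * Real.exp (2 * Real.pi * ε) < ‖p.1‖ := hρ1.trans_le hle
    have l1 := s14_lev_neg _ _ _ hlo.le
    have l2 := s14_lev_mono ‖p.1‖ (-ε) 0 n0 (by linarith)
    simp only [mul_zero, Real.exp_zero, mul_one] at l2
    refine s14_est_all τ hτ a b δ N κ m hm Δ hN0 hκ0 hN hY hξ (-ε) hκ1 p ?_ (by linarith) hYp 0
      ?_ (by simp) (by simp) _ ?_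
    · rw [s14T_mem τ _ hτ0]
      have : (((-ε : ℝ) : ℂ) * I).im = -ε := by simp
      rw [this]
      exact ⟨l1, l2.trans hp.2.1, hp.2.2⟩
    · rw [s14T_zero]
      exact ⟨by linarith, hp.2⟩
    · rw [s14h, if_pos hle]; exact norm_sub_le _ _
  · rw [s14h, if_neg hle]
    push Not at hle
    have l1 : a ≤ ‖p.1‖ * Real.exp (2 * Real.pi * τ.im) := by
      have := s14_lev_neg a ‖p.1‖ (-τ.im) (by
        have h := hp.1
        rw [mul_comm] at h
        convert h using 3
        ring)
      simpa using this
    have l2 : ‖p.1‖ * Real.exp (2 * Real.pi * (τ.im + ε)) < b := by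
      have : 0 < Real.exp (2 * Real.pi * (τ.im + ε)) := Real.exp_pos _
      nlinarith
    have l3 := s14_lev_mono ‖p.1‖ τ.im (τ.im + ε) n0 (by linarith)
    refine s14_est_all τ hτ a b δ N κ m hm Δ hN0 hκ0 hN hY hξ (τ.im + ε) hκ2 p ?_ (by linarith)
      hYp τ ?_ hτ.le (by simp [hτ0]) _ ?_
    · rw [s14T_mem τ _ hτ0]
      have : (((τ.im + ε : ℝ) : ℂ) * I).im = τ.im + ε := by simp
      rw [this]
      exact ⟨by linarith, l2.le, hp.2.2⟩
    · rw [s14T_mem τ _ hτ0]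
      exact ⟨l1, by linarith, hp.2.2⟩
    · exact norm_add_le _ _

end S14


/-- resolution of the linearized (homological) equation on the sectorial
domains `S_δ`, with uniqueness, uniform bounds `C‖Δ‖_m`, decay `C‖Δ‖_m/√(Im ξ)`, and
`D_θ‖Δ‖_m/|ξ|^{m−2}` decay on subsectors `θ − ϖ ≤ arg ξ ≤ π − θ − ϖ`, `ϖ = arg τ`. -/
theorem statement14 (τ : ℂ) (hτ : 0 < τ.im) (a b : ℝ) (ha : 0 < a) (hab : a < b)
    (haqb : a < ‖Complex.exp (2 * (Real.pi : ℂ) * Complex.I * τ)‖ * b)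
    (m : ℕ) (hm : 3 ≤ m) :
    ∃ δ₀ C : ℝ, 0 < δ₀ ∧ 0 < C ∧ ∃ Dfun : ℝ → ℝ,
      (∀ θ : ℝ, 0 < θ → θ ≤ Real.pi / 2 → 0 < Dfun θ) ∧
      ∀ δ : ℝ, 0 < δ → δ ≤ δ₀ →
        ∀ Δ : ℂ × ℂ → ℂ,
          ContinuousOn Δ (sectDom τ a b δ) →
          DifferentiableOn ℂ Δ (interior (sectDom τ a b δ)) →
          BddAbove ((fun p : ℂ × ℂ => ‖Δ p‖ * ‖p.2‖ ^ m) ''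
            sectDom τ a b δ) →
          ∃ h : ℂ × ℂ → ℂ,
            linSolProp τ a b δ Δ h ∧
            (∀ h' : ℂ × ℂ → ℂ, linSolProp τ a b δ Δ h' →
              ∀ p ∈ sectDom' τ a b δ, h' p = h p) ∧
            (∀ p ∈ sectDom' τ a b δ,
              ‖h p‖ ≤
                C * sSup ((fun p : ℂ × ℂ =>
                    ‖Δ p‖ * ‖p.2‖ ^ m) '' sectDom τ a b δ)) ∧
            (∀ p ∈ sectDom' τ a b δ, 1 ≤ p.2.im →
              ‖h p‖ ≤
                C * sSup ((fun p : ℂ × ℂ =>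
                    ‖Δ p‖ * ‖p.2‖ ^ m) '' sectDom τ a b δ) /
                  Real.sqrt p.2.im) ∧
            (∀ θ : ℝ, 0 < θ → θ ≤ Real.pi / 2 →
              ∀ p ∈ sectDom' τ a b δ,
                θ - Complex.arg τ ≤ Complex.arg p.2 →
                Complex.arg p.2 ≤ Real.pi - θ - Complex.arg τ →
                ‖h p‖ ≤
                  Dfun θ * sSup ((fun p : ℂ × ℂ =>
                      ‖Δ p‖ * ‖p.2‖ ^ m) '' sectDom τ a b δ) /
                    ‖p.2‖ ^ (m - 2)) := by
  have hτ0 : τ ≠ 0 := by rintro rfl; simp at hτ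
  have hn : 0 < ‖τ‖ := norm_pos_iff.2 hτ0
  have hpi := Real.pi_pos
  rw [s14Q] at haqb
  set Q := Real.exp (-(2 * Real.pi * τ.im)) with hQdef
  have hQ0 : 0 < Q := Real.exp_pos _
  have hQ1 : Q ≤ 1 := by
    rw [hQdef, Real.exp_le_one_iff]
    have := mul_pos (mul_pos two_pos hpi) hτ
    linarith
  have hS' : ∀ δ, sectDom' τ a b δ = sectDom τ (Q * a) b δ := by
    intro δ; rw [hQdef, ← s14Q]; rfl
  obtain ⟨ε, ρ, hε, hε', hρ1, hρ2⟩ := s14_params τ hτ a b ha haqb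
  obtain ⟨κ, hκ0, hκ1, hκ2⟩ := s14_kappa τ hτ ε hε (by linarith)
  set C₁ := κ * (‖τ‖ * Real.pi) + 1 with hC₁
  have hC₁0 : 0 < C₁ := by positivity
  refine ⟨Q * a * Real.exp (-(2 * Real.pi * (1 + ‖τ‖))), 2 * C₁, by positivity, by positivity,
    fun θ => C₁ * (2 / Real.sin θ) ^ (m - 2), ?_, ?_⟩
  · intro θ h1 h2
    have : 0 < Real.sin θ := Real.sin_pos_of_pos_of_lt_pi h1 (by linarith)
    positivity
  intro δ hδ hδ₀ Δ hc hd hbdd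
  set N := sSup ((fun p : ℂ × ℂ => ‖Δ p‖ * ‖p.2‖ ^ m) '' sectDom τ a b δ) with hNdef
  have hN0 : 0 ≤ N := by
    apply Real.sSup_nonneg
    rintro _ ⟨p, -, rfl⟩
    positivity
  have hN : ∀ p ∈ sectDom τ a b δ, ‖Δ p‖ * ‖p.2‖ ^ m ≤ N := fun p hp =>
    le_csSup hbdd ⟨p, hp, rfl⟩
  have hYR : ∀ p ∈ sectDom τ (Q * a) b δ, 1 + ‖τ‖ ≤ (τ * p.2).im := by
    intro p hp
    exact s14_deep τ (Q * a) δ (1 + ‖τ‖) (mul_pos hQ0 ha) hδ₀ p hp.1 hp.2.2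
  have hsub : ∀ p ∈ sectDom τ a b δ, p ∈ sectDom τ (Q * a) b δ := fun p hp =>
    ⟨le_trans (by nlinarith) hp.1, hp.2⟩
  have hY : ∀ p ∈ sectDom τ a b δ, 1 ≤ (τ * p.2).im := fun p hp => by
    linarith [hYR p (hsub p hp)]
  have hξ : ∀ p ∈ sectDom τ a b δ, 1 ≤ ‖p.2‖ := by
    intro p hp
    have h1 := hYR p (hsub p hp)
    have h2 := Complex.im_le_norm (τ * p.2)
    rw [norm_mul] at h2
    by_contra hcon
    push Not at hcon
    nlinarith
  have hB : ∀ p ∈ sectDom τ a b δ, ‖Δ p‖ ≤ (N * ‖τ‖ ^ 2) * (1 + (τ * p.2).re ^ 2)⁻¹ := by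
    intro p hp
    have h1 := hN p hp
    have h2 := hY p hp
    have h5 : 1 + (τ * p.2).re ^ 2 ≤ ‖τ‖ ^ 2 * ‖p.2‖ ^ 2 := by
      rw [← mul_pow, ← norm_mul, ← Complex.normSq_eq_norm_sq, Complex.normSq_apply]
      nlinarith
    have h6 : ‖p.2‖ ^ 2 ≤ ‖p.2‖ ^ m := pow_le_pow_right₀ (hξ p hp) (by omega)
    rw [← div_eq_mul_inv, le_div_iff₀ (by positivity)]
    calc ‖Δ p‖ * (1 + (τ * p.2).re ^ 2) ≤ ‖Δ p‖ * (‖τ‖ ^ 2 * ‖p.2‖ ^ m) := by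
          refine mul_le_mul_of_nonneg_left (h5.trans ?_) (norm_nonneg _)
          gcongr
      _ = (‖Δ p‖ * ‖p.2‖ ^ m) * ‖τ‖ ^ 2 := by ring
      _ ≤ _ := by gcongr
  obtain ⟨s1, s2, s3⟩ := s14_sol τ hτ a b δ (N * ‖τ‖ ^ 2) ha hδ (by positivity) Δ hc hd hB
    ε ρ hε (by linarith) hρ1 hρ2
  have htn : τ.im ≤ ‖τ‖ := Complex.im_le_norm τ
  have est : ∀ p ∈ sectDom τ (Q * a) b δ, _ := fun p hp =>
    s14_est_h τ hτ a b δ N κ m hm Δ ha hN0 hκ0 hN hY hξ ε ρ hε hρ1 hρ2 hκ1 hκ2 p hp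
      (by linarith [hYR p hp]) (by linarith [hYR p hp])
  simp only [hS']
  have hsol : linSolProp τ a b δ Δ (s14h τ Δ ε ρ) := by
    unfold linSolProp
    rw [hS']
    refine ⟨s1, s2, ⟨_, fun p hp => (est p hp).1⟩, ?_, ⟨2 * C₁ * N, fun p hp h1 => ?_⟩⟩
    · intro p hp
      rw [s14T_neg τ hτ0]; exact s3 p hp
    · have := (est p hp).2.1 h1
      rwa [le_div_iff₀ (Real.sqrt_pos.2 (by linarith))] at this
  refine ⟨s14h τ Δ ε ρ, hsol, ?_, fun p hp => (est p hp).1, fun p hp h1 => (est p hp).2.1 h1,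
    fun θ h1 h2 p hp h3 h4 => (est p hp).2.2 θ h1 h2 h3 h4⟩
  intro h' hh' p hp
  unfold linSolProp at hh'
  rw [hS'] at hh'
  obtain ⟨c1, d1, ⟨M, b1⟩, e1, ⟨M', f1⟩⟩ := hh'
  have hz := s14_uniq τ hτ a b δ ha hab hδ haqb (fun p => h' p - s14h τ Δ ε ρ p)
    (c1.sub s1) (d1.sub s2) (M + 2 * C₁ * N)
    (fun p hp => (norm_sub_le _ _).trans (add_le_add (b1 p hp) (est p hp).1))
    (fun p hp => by
      have a1 := e1 p hp
      have a2 := s3 p hp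
      rw [s14T_neg τ hτ0] at a1
      linear_combination a1 - a2)
    (M' + 2 * C₁ * N)
    (fun p hp h1 => by
      have a1 := f1 p hp h1
      have a2 := (est p hp).2.1 h1
      rw [le_div_iff₀ (Real.sqrt_pos.2 (by linarith))] at a2
      calc _ ≤ (‖h' p‖ + ‖s14h τ Δ ε ρ p‖) * Real.sqrt p.2.im := by
            gcongr; exact norm_sub_le _ _
        _ = ‖h' p‖ * Real.sqrt p.2.im + ‖s14h τ Δ ε ρ p‖ * Real.sqrt p.2.im := by ring
        _ ≤ _ := add_le_add a1 a2) p hp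
  exact sub_eq_zero.1 hz
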